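/- arXiv:2207.08458 — 2 statements merged into one kernel-verified Lean document; each statement's English description precedes it below -/
import Mathlib

section
/- Let S = {f_1,…,f_m} be a C¹ weakly conformal IFS with attractor K. For any c > 1 there exists a constant D(c) ≥ 1 such that for every k ∈ ℕ, every word i ∈ Λ^k and every word j ∈ Λ*, one has (1/2) D(c)^{-2} c^{-2k} |f_i(K)|·|f_j(K)| ≤ |f_{ij}(K)| ≤ 2 D(c)^{2} c^{2k} |f_i(K)|·|f_j(K)|, where ij denotes the concatenated word. -/
/-!
The heart of the matter is that long compositions are almost similarities: for every `c > 1`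
there is `D` such that each `f_w` distorts distances on `K` by a constant ratio `L_w`, up to the
factor `D * c ^ |w|` (`C1IFS.word_almostSim`). Applied to the sets `K` and `f_j(K) ⊆ K`, this
bounds `|f_w(K)|` by `L_w |K|` and `|f_w(f_j(K))|` by `L_w |f_j(K)|` on both sides, and dividing
eliminates `L_w`; a power of `|K|` is absorbed by the constant.

To get the almost-similarity, weak conformality supplies a block length `n` such that
`‖f_v'(z)‖ < c ^ n * m(f_v'(z))` for all `|v| = n` and `z ∈ K` (`C1IFS.word_deriv_ratio`). Strict
differentiability and a Lebesgue number for `K` turn this into: on balls of one fixed radius `δ`,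
`f_v` multiplies distances by a fixed number, up to `c ^ n` (`C1IFS.block_local`). Since
`diam f_u(K) < δ` once `u` is long (`C1IFS.diam_word`), a long word can be peeled off from the left
in blocks of length `n`, each of which acts on a set of diameter less than `δ`; the remaining short
tail is bi-Lipschitz on `K` because the `f_i` are (`C1IFS.letter_biLip`). Long words
are only ever evaluated at points of `K`, so neither convexity of `X` nor distortion estimates for
derivatives of long compositions are needed.

The uniform decay of the diameters uses the coding map: the `f_w` are nonexpanding on `K` at a fixed
small scale, so pointwise convergence of `f_{x_1} ∘ ⋯ ∘ f_{x_k}` to a constant is uniform on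
`K`, and compactness of `Λ^ℕ` makes it uniform in the word. The same decay shows that the coding map
is onto `K`, so that weak conformality speaks about all points of `K`. -/

open Filter Metric Set MeasureTheory Topology ENNReal NNReal

noncomputable section

/-- ℝ^d with the sup norm. -/
abbrev Euc (d : ℕ) : Type := Fin d → ℝ

/-- A `C¹` iterated function system on `ℝ^d`: `m` maps, each sending a compact set `X`
into itself, each a `C¹` diffeomorphism on an open set `U ⊇ X`, with
`sup_{x ∈ X} ‖f_i'(x)‖ < 1`. -/
structure C1IFS (d m : ℕ) where
  f : Fin m → Euc d → Euc d
  f' : Fin m → Euc d → (Euc d →L[ℝ] Euc d)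
  X : Set (Euc d)
  U : Set (Euc d)
  compactX : IsCompact X
  nonemptyX : X.Nonempty
  openU : IsOpen U
  subXU : X ⊆ U
  mapsX : ∀ i, Set.MapsTo (f i) X X
  hasDeriv : ∀ i, ∀ x ∈ U, HasFDerivAt (f i) (f' i x) x
  derivCont : ∀ i, ContinuousOn (f' i) U
  injOnU : ∀ i, Set.InjOn (f i) U
  derivBij : ∀ i, ∀ x ∈ U, Function.Bijective (f' i x)
  contract : ∀ i, ∃ c : ℝ, c < 1 ∧ ∀ x ∈ X, ‖f' i x‖ ≤ c

namespace C1IFS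

variable {d m : ℕ}

/-- For a word `w = [i₁, …, i_k]`, the composition `f_{i₁} ∘ ⋯ ∘ f_{i_k}`. -/
def wmap (S : C1IFS d m) : List (Fin m) → Euc d → Euc d
  | [] => id
  | i :: w => S.f i ∘ S.wmap w

/-- Derivative of `wmap w` at `x` (chain rule). -/
def wderiv (S : C1IFS d m) : List (Fin m) → Euc d → (Euc d →L[ℝ] Euc d)
  | [], _ => ContinuousLinearMap.id ℝ (Euc d)
  | i :: w, x => (S.f' i (S.wmap w x)).comp (S.wderiv w x)

end C1IFS

/-- `K` is the attractor of `S`: nonempty compact with `K = ⋃ i, f_i(K)`. -/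
def IsAttractor {d m : ℕ} (S : C1IFS d m) (K : Set (Euc d)) : Prop :=
  IsCompact K ∧ K.Nonempty ∧ K ⊆ S.X ∧ K = ⋃ i, S.f i '' K

/-- The word made of the first `k` letters of the sequence `x`. -/
def wpre {m : ℕ} (x : ℕ → Fin m) (k : ℕ) : List (Fin m) :=
  List.ofFn fun j : Fin k => x j

/-- The shift `σ^k`. -/
def shiftSeq {m : ℕ} (x : ℕ → Fin m) (k : ℕ) : ℕ → Fin m := fun n => x (n + k)

/-- `m(A) = inf_{‖v‖ = 1} ‖A v‖`. -/
def opMinNorm {d : ℕ} (A : Euc d →L[ℝ] Euc d) : ℝ :=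
  sInf {r : ℝ | ∃ v : Euc d, ‖v‖ = 1 ∧ r = ‖A v‖}

/-- `S` is weakly conformal, with coding map `proj`:
`proj x = lim_k f_{x₁} ∘ ⋯ ∘ f_{x_k} (z)` for every `z ∈ K`, and
`sup_x (1/k) (log ‖f'_{(x₁…x_k)}(proj (σ^k x))‖ - log m(f'_{(x₁…x_k)}(proj (σ^k x)))) → 0`. -/
def WeaklyConformalWith {d m : ℕ} (S : C1IFS d m) (K : Set (Euc d))
    (proj : (ℕ → Fin m) → Euc d) : Prop :=
  (∀ x, proj x ∈ K) ∧
  (∀ x, ∀ z ∈ K, Tendsto (fun k => S.wmap (wpre x k) z) atTop (𝓝 (proj x))) ∧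
  Tendsto
    (fun k : ℕ =>
      ⨆ x : ℕ → Fin m,
        (Real.log ‖S.wderiv (wpre x k) (proj (shiftSeq x k))‖ -
            Real.log (opMinNorm (S.wderiv (wpre x k) (proj (shiftSeq x k))))) / k)
    atTop (𝓝 0)

/-- `S` is weakly conformal. -/
def IsWeaklyConformal {d m : ℕ} (S : C1IFS d m) (K : Set (Euc d)) : Prop :=
  ∃ proj, WeaklyConformalWith S K proj

/-- `limsup` of sets indexed by finite words: points belonging to `E w` for words `w`
of arbitrarily large length. -/
def limsupWords {m : ℕ} {α : Type*} (E : List (Fin m) → Set α) : Set α :=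
  ⋂ k : ℕ, ⋃ (w : List (Fin m)) (_ : k ≤ w.length), E w

/-- `limsup` of a sequence of sets. -/
def limsupSets {α : Type*} (A : ℕ → Set α) : Set α :=
  ⋂ k : ℕ, ⋃ (n : ℕ) (_ : k ≤ n), A n

/-- The pressure of `S` at `s` is `P`:
`(1/k) log Σ_{w ∈ Λ^k} |f_w(K)|^s → P`. -/
def HasPressure {d m : ℕ} (S : C1IFS d m) (K : Set (Euc d)) (s P : ℝ) : Prop :=
  Tendsto
    (fun k : ℕ =>
      Real.log (∑ w : Fin k → Fin m, diam (S.wmap (List.ofFn w) '' K) ^ s) / k)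
    atTop (𝓝 P)

/-- `s`-dimensional Hausdorff content (coverings by closed balls, no scale restriction). -/
def hContent {d : ℕ} (s : ℝ) (E : Set (Euc d)) : ℝ≥0∞ :=
  ⨅ (t : ℕ → Set (Euc d)) (_ : E ⊆ ⋃ n, t n)
    (_ : ∀ n, ∃ x r, t n = closedBall x r),
    ∑' n, ENNReal.ofReal (diam (t n)) ^ s

/-- The `μ`-essential `s`-dimensional Hausdorff content of `A`. -/
def essContent {d : ℕ} (μ : Measure (Euc d)) (s : ℝ) (A : Set (Euc d)) : ℝ≥0∞ :=
  ⨅ (E : Set (Euc d)) (_ : E ⊆ A) (_ : MeasurableSet E) (_ : μ E = μ A),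
    hContent s E

/-- `μ` is the weakly conformal measure for `S` and the positive probability vector `p`. -/
def IsWeaklyConformalMeasure {d m : ℕ} (S : C1IFS d m) (p : Fin m → ℝ)
    (μ : Measure (Euc d)) : Prop :=
  (∀ i, 0 < p i) ∧ (∑ i, p i = 1) ∧ IsProbabilityMeasure μ ∧
    μ = ∑ i, ENNReal.ofReal (p i) • μ.map (S.f i)

/-- `μ` is exact dimensional with dimension `α`. -/
def ExactDim {d : ℕ} (μ : Measure (Euc d)) (α : ℝ) : Prop :=
  ∀ᵐ x ∂μ, Tendsto (fun r : ℝ => Real.log (μ (closedBall x r)).toReal / Real.log r)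
    (𝓝[>] 0) (𝓝 α)

/-- The sequence of balls `B` is `μ`-asymptotically covering. -/
def MuAC {d : ℕ} (μ : Measure (Euc d)) (B : ℕ → Set (Euc d)) : Prop :=
  ∃ C : ℝ≥0∞, 0 < C ∧ ∀ Ω : Set (Euc d), IsOpen Ω → ∀ g : ℕ,
    ∃ F : Finset ℕ, (∀ n ∈ F, g ≤ n) ∧ (∀ n ∈ F, B n ⊆ Ω) ∧
      ((F : Set ℕ).Pairwise fun a b => Disjoint (B a) (B b)) ∧
      C * μ Ω ≤ μ (⋃ n ∈ F, B n)

/-- A gauge function: vanishing at `0`, nonnegative, increasing near `0`. -/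
def IsGauge (ζ : ℝ → ℝ) : Prop :=
  (∀ t, 0 ≤ ζ t) ∧ ζ 0 = 0 ∧ ∃ η > 0, StrictMonoOn ζ (Icc 0 η)

/-- Hausdorff pre-measure at scale `t` associated with a gauge `ζ`. -/
def gaugeContentAt {d : ℕ} (ζ : ℝ → ℝ) (t : ℝ) (E : Set (Euc d)) : ℝ≥0∞ :=
  ⨅ (c : ℕ → Set (Euc d)) (_ : E ⊆ ⋃ n, c n)
    (_ : ∀ n, (∃ x r, c n = closedBall x r) ∧ diam (c n) ≤ t),
    ∑' n, ENNReal.ofReal (ζ (diam (c n)))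

/-- The Hausdorff measure associated with the gauge `ζ`. -/
def gaugeMeasure {d : ℕ} (ζ : ℝ → ℝ) (E : Set (Euc d)) : ℝ≥0∞ :=
  ⨆ (t : ℝ) (_ : 0 < t), gaugeContentAt ζ t E

/-- The cylinder of sequences beginning with the word `w`. -/
def cylinder {m : ℕ} (w : List (Fin m)) : Set (ℕ → Fin m) :=
  {x | wpre x w.length = w}

/-- The generation-`k` cut `Λ^{(k)}`. -/
def lamCut {d m : ℕ} (S : C1IFS d m) (K : Set (Euc d)) (k : ℕ) : Set (List (Fin m)) :=
  {w | w ≠ [] ∧ diam (S.wmap w '' K) ≤ ((2 : ℝ) ^ k)⁻¹ ∧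
    ((2 : ℝ) ^ k)⁻¹ < diam (S.wmap w.dropLast '' K)}

/-- The asymptotically weak separation condition:
`t_k = max_x #{f_w : w ∈ Λ^{(k)}, f_w(K) ∩ B(x, 2^{-k}) ≠ ∅}` satisfies `(log t_k)/k → 0`. -/
def AWSC {d m : ℕ} (S : C1IFS d m) (K : Set (Euc d)) : Prop :=
  ∃ t : ℕ → ℕ,
    (∀ k : ℕ, ∀ x : Euc d,
      Set.ncard {g : Euc d → Euc d | ∃ w ∈ lamCut S K k, S.wmap w = g ∧
        (S.wmap w '' K ∩ closedBall x (((2 : ℝ) ^ k)⁻¹)).Nonempty} ≤ t k) ∧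
    Tendsto (fun k : ℕ => Real.log (t k) / k) atTop (𝓝 0)

/-- `S` has no exact overlaps. -/
def NoExactOverlaps {d m : ℕ} (S : C1IFS d m) : Prop :=
  ∀ w w' : List (Fin m), w.length = w'.length → w ≠ w' → S.wmap w ≠ S.wmap w'

/-- A self-similar IFS on `ℝ^d` with contraction ratios `c i ∈ (0,1)`. -/
structure SelfSimIFS (d m : ℕ) where
  f : Fin m → Euc d → Euc d
  c : Fin m → ℝ
  c_pos : ∀ i, 0 < c i
  c_lt_one : ∀ i, c i < 1
  sim : ∀ i x y, dist (f i x) (f i y) = c i * dist x y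

namespace SelfSimIFS

variable {d m : ℕ}

/-- For a word `w = [i₁, …, i_k]`, the composition `f_{i₁} ∘ ⋯ ∘ f_{i_k}`. -/
def wmap (S : SelfSimIFS d m) : List (Fin m) → Euc d → Euc d
  | [] => id
  | i :: w => S.f i ∘ S.wmap w

/-- `K` is the attractor of the self-similar IFS `S`. -/
def IsAttractor (S : SelfSimIFS d m) (K : Set (Euc d)) : Prop :=
  IsCompact K ∧ K.Nonempty ∧ K = ⋃ i, S.f i '' K

end SelfSimIFS

/-! ### Compactness tools -/

/-- Strict differentiability along a compact set, at one scale `δ` for the whole set. The linear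
map and the tolerance `ε` are those of some point `z` of `K`, the same for the whole ball. -/
theorem uniform_strict {d : ℕ} {f : Euc d → Euc d} {A : Euc d → (Euc d →L[ℝ] Euc d)}
    {K : Set (Euc d)} (hK : IsCompact K) (hf : ∀ z ∈ K, HasStrictFDerivAt f (A z) z)
    {ε : Euc d → ℝ} (hε : ∀ z ∈ K, 0 < ε z) :
    ∃ δ > 0, ∀ x ∈ K, ∃ z ∈ K, ∀ p ∈ ball x δ, ∀ q ∈ ball x δ,
      ‖f p - f q - A z (p - q)‖ ≤ ε z * ‖p - q‖ := by
  have h1 : ∀ z : K, ∃ V : Set (Euc d), IsOpen V ∧ (z : Euc d) ∈ V ∧ ∀ p ∈ V, ∀ q ∈ V,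
      ‖f p - f q - A z (p - q)‖ ≤ ε z * ‖p - q‖ := by
    intro z
    have h := (hf z z.2).isLittleO.def (hε z z.2)
    rw [nhds_prod_eq] at h
    obtain ⟨V, hV, h⟩ := mem_prod_same_iff.1 h
    obtain ⟨W, hWV, hW, hz⟩ := _root_.mem_nhds_iff.1 hV
    exact ⟨W, hW, hz, fun p hp q hq => h (mk_mem_prod (hWV hp) (hWV hq))⟩
  choose V hVo hVm hV using h1
  obtain ⟨δ, hδ, h⟩ := lebesgue_number_lemma_of_metric hK hVo
    (fun z hz => mem_iUnion.2 ⟨⟨z, hz⟩, hVm _⟩)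
  refine ⟨δ, hδ, fun x hx => ?_⟩
  obtain ⟨i, hi⟩ := h x hx
  exact ⟨i, i.2, fun p hp q hq => hV i p (hi hp) q (hi hq)⟩

/-- Finitely many conditions, each satisfied by all small enough `δ > 0`, have a common `δ`. -/
theorem exists_pos_forall {ι : Type*} [Finite ι] {P : ι → ℝ → Prop}
    (hP : ∀ i a b, 0 < b → b ≤ a → P i a → P i b) (h : ∀ i, ∃ δ > 0, P i δ) :
    ∃ δ > 0, ∀ i, P i δ := by
  have h1 : ∀ i, ∀ᶠ δ in 𝓝[>] (0 : ℝ), P i δ := by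
    intro i
    obtain ⟨a, ha, hPa⟩ := h i
    filter_upwards [Ioc_mem_nhdsGT ha] with b hb
    exact hP i a b hb.1 hb.2 hPa
  obtain ⟨δ, h2, h3⟩ := ((eventually_all.2 h1).and self_mem_nhdsWithin).exists
  exact ⟨δ, h3, h2⟩

/-! ### Words acting on the attractor, and their derivatives -/

namespace C1IFS

variable {d m : ℕ} (S : C1IFS d m) {K : Set (Euc d)}

theorem wmap_append (u v : List (Fin m)) (x : Euc d) :
    S.wmap (u ++ v) x = S.wmap u (S.wmap v x) := by
  induction u with
  | nil => rfl
  | cons i u ih => simp [wmap, ih]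

theorem mapsTo_letter (hK : IsAttractor S K) (i : Fin m) : MapsTo (S.f i) K K := by
  intro x hx
  rw [hK.2.2.2]
  exact mem_iUnion.2 ⟨i, x, hx, rfl⟩

theorem mapsTo_word (hK : IsAttractor S K) (w : List (Fin m)) : MapsTo (S.wmap w) K K := by
  induction w with
  | nil => exact fun x hx => hx
  | cons i w ih => exact (S.mapsTo_letter hK i).comp ih

theorem strict_letter (hK : IsAttractor S K) (i : Fin m) {x : Euc d} (hx : x ∈ K) :
    HasStrictFDerivAt (S.f i) (S.f' i x) x := by
  have hU : S.U ∈ 𝓝 x := S.openU.mem_nhds (S.subXU (hK.2.2.1 hx))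
  refine hasStrictFDerivAt_of_hasFDerivAt_of_continuousAt ?_ ((S.derivCont i).continuousAt hU)
  filter_upwards [hU] with y hy using S.hasDeriv i y hy

theorem strict_word (hK : IsAttractor S K) (w : List (Fin m)) {x : Euc d} (hx : x ∈ K) :
    HasStrictFDerivAt (S.wmap w) (S.wderiv w x) x := by
  induction w with
  | nil => exact hasStrictFDerivAt_id x
  | cons i w ih => exact (S.strict_letter hK i (S.mapsTo_word hK w hx)).comp x ih

theorem letter_deriv_bounds (hd : 1 ≤ d) (hK : IsAttractor S K) :
    ∃ b > 0, ∀ i, ∀ z ∈ K, ∀ u, b * ‖u‖ ≤ ‖S.f' i z u‖ := by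
  apply exists_pos_forall
  · intro i a b _ hba h z hz u
    exact (mul_le_mul_of_nonneg_right hba (norm_nonneg u)).trans (h z hz u)
  intro i
  have : Nonempty (Fin d) := ⟨⟨0, hd⟩⟩
  have hKU : K ⊆ S.U := hK.2.2.1.trans S.subXU
  have hcont : ContinuousOn (fun p : Euc d × Euc d => ‖S.f' i p.1 p.2‖)
      (K ×ˢ sphere (0 : Euc d) 1) := by
    refine (ContinuousOn.clm_apply ?_ continuousOn_snd).norm
    exact ((S.derivCont i).mono hKU).comp continuousOn_fst (fun p hp => hp.1)
  obtain ⟨p, hp, hmin⟩ := (hK.1.prod (isCompact_sphere (0 : Euc d) 1)).exists_isMinOn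
    (hK.2.1.prod (NormedSpace.sphere_nonempty.2 zero_le_one)) hcont
  have hp2 : p.2 ≠ 0 := by
    intro h
    have := hp.2
    simp [h] at this
  refine ⟨‖S.f' i p.1 p.2‖, ?_, fun z hz u => ?_⟩
  · refine norm_pos_iff.2 fun h => hp2 ?_
    exact (S.derivBij i p.1 (hKU hp.1)).1 (by rw [h, map_zero])
  · rcases eq_or_ne u 0 with rfl | hu
    · simp
    have hu' : 0 < ‖u‖ := norm_pos_iff.2 hu
    have h1 : ‖S.f' i p.1 p.2‖ ≤ ‖S.f' i z (‖u‖⁻¹ • u)‖ :=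
      hmin (show (z, ‖u‖⁻¹ • u) ∈ K ×ˢ sphere (0 : Euc d) 1 from
        ⟨hz, by simp [norm_smul, hu'.ne']⟩)
    rw [map_smul, norm_smul, norm_inv, norm_norm, inv_mul_eq_div, le_div_iff₀ hu'] at h1
    exact h1

theorem letter_deriv_norm_lt_one (hK : IsAttractor S K) (i : Fin m) {z : Euc d} (hz : z ∈ K) :
    ‖S.f' i z‖ < 1 := by
  obtain ⟨c, hc, h⟩ := S.contract i
  exact (h z (hK.2.2.1 hz)).trans_lt hc

theorem word_deriv_lower (hK : IsAttractor S K) {b : ℝ} (hb : 0 < b)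
    (h : ∀ i, ∀ z ∈ K, ∀ u, b * ‖u‖ ≤ ‖S.f' i z u‖) (w : List (Fin m)) {z : Euc d} (hz : z ∈ K)
    (u : Euc d) : b ^ w.length * ‖u‖ ≤ ‖S.wderiv w z u‖ := by
  induction w with
  | nil => simp [wderiv]
  | cons i w ih =>
    calc b ^ (i :: w).length * ‖u‖ = b * (b ^ w.length * ‖u‖) := by
          rw [List.length_cons, pow_succ]; ring
      _ ≤ b * ‖S.wderiv w z u‖ := by gcongr
      _ ≤ _ := h i _ (S.mapsTo_word hK w hz) _

theorem word_deriv_norm_le_one (hK : IsAttractor S K) (w : List (Fin m)) {z : Euc d}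
    (hz : z ∈ K) : ‖S.wderiv w z‖ ≤ 1 := by
  induction w with
  | nil => exact ContinuousLinearMap.norm_id_le
  | cons i w ih =>
    calc ‖S.wderiv (i :: w) z‖ ≤ ‖S.f' i (S.wmap w z)‖ * ‖S.wderiv w z‖ :=
          ContinuousLinearMap.opNorm_comp_le _ _
      _ ≤ 1 * 1 := by
          gcongr
          exact (S.letter_deriv_norm_lt_one hK i (S.mapsTo_word hK w hz)).le
      _ = 1 := one_mul 1

/-! ### Metric estimates for a single map -/

theorem letter_local (hd : 1 ≤ d) (hK : IsAttractor S K) :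
    ∃ a > 0, ∃ δ > 0, ∀ i, ∀ p ∈ K, ∀ q ∈ K, dist p q < δ →
      a * dist p q ≤ dist (S.f i p) (S.f i q) ∧ dist (S.f i p) (S.f i q) ≤ dist p q := by
  obtain ⟨b, hb, h⟩ := S.letter_deriv_bounds hd hK
  refine ⟨b / 2, by positivity, ?_⟩
  apply exists_pos_forall
  · intro i s t _ hts H p hp q hq hpq
    exact H p hp q hq (hpq.trans_le hts)
  intro i
  obtain ⟨δ, hδ, H⟩ := uniform_strict hK.1 (fun z hz => S.strict_letter hK i hz)
    (ε := fun z => min (b / 2) (1 - ‖S.f' i z‖)) (fun z hz => lt_min (by positivity)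
      (sub_pos.2 (S.letter_deriv_norm_lt_one hK i hz)))
  refine ⟨δ, hδ, fun p hp q hq hpq => ?_⟩
  obtain ⟨z, hz, Hz⟩ := H p hp
  have h1 := Hz p (mem_ball_self hδ) q (by rwa [mem_ball, dist_comm])
  have h2 := h i z hz (p - q)
  have h3 := (S.f' i z).le_opNorm (p - q)
  rw [dist_eq_norm, dist_eq_norm]
  have h4 := abs_le.1 ((abs_norm_sub_norm_le _ _).trans h1)
  have h5 : min (b / 2) (1 - ‖S.f' i z‖) * ‖p - q‖ ≤ b / 2 * ‖p - q‖ := by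
    gcongr; exact min_le_left _ _
  have h6 : min (b / 2) (1 - ‖S.f' i z‖) * ‖p - q‖ ≤ (1 - ‖S.f' i z‖) * ‖p - q‖ := by
    gcongr; exact min_le_right _ _
  constructor <;> linarith [h4.1, h4.2]

theorem word_nonexpanding (hK : IsAttractor S K) {δ : ℝ}
    (h : ∀ i, ∀ p ∈ K, ∀ q ∈ K, dist p q < δ → dist (S.f i p) (S.f i q) ≤ dist p q)
    (w : List (Fin m)) {p q : Euc d} (hp : p ∈ K) (hq : q ∈ K) (hpq : dist p q < δ) :
    dist (S.wmap w p) (S.wmap w q) ≤ dist p q := by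
  induction w with
  | nil => exact le_rfl
  | cons i w ih =>
    exact (h i _ (S.mapsTo_word hK w hp) _ (S.mapsTo_word hK w hq) (ih.trans_lt hpq)).trans ih

theorem letter_biLip (hd : 1 ≤ d) (hK : IsAttractor S K) :
    ∃ B ≥ (1 : ℝ), ∀ i, ∀ p ∈ K, ∀ q ∈ K,
      dist p q ≤ B * dist (S.f i p) (S.f i q) ∧ dist (S.f i p) (S.f i q) ≤ B * dist p q := by
  obtain ⟨a, ha, δ, hδ, h⟩ := S.letter_local hd hK
  have hKU : K ⊆ S.U := hK.2.2.1.trans S.subXU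
  -- pairs at distance at least `δ` form a compact set, where injectivity gives a lower bound
  have hfar : ∃ η > 0, ∀ i, ∀ p ∈ K, ∀ q ∈ K, δ ≤ dist p q → η ≤ dist (S.f i p) (S.f i q) := by
    apply exists_pos_forall
    · intro i s t _ hts H p hp q hq hpq
      exact hts.trans (H p hp q hq hpq)
    intro i
    have hc : IsCompact ((K ×ˢ K) ∩ {p : Euc d × Euc d | δ ≤ dist p.1 p.2}) :=
      (hK.1.prod hK.1).inter_right (isClosed_le continuous_const continuous_dist)
    rcases ((K ×ˢ K) ∩ {p : Euc d × Euc d | δ ≤ dist p.1 p.2}).eq_empty_or_nonempty with he | hne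
    · refine ⟨1, one_pos, fun p hp q hq hpq => ?_⟩
      have : (p, q) ∈ ((K ×ˢ K) ∩ {p : Euc d × Euc d | δ ≤ dist p.1 p.2}) := ⟨⟨hp, hq⟩, hpq⟩
      rw [he] at this
      exact this.elim
    · have hf : ContinuousOn (S.f i) K := fun x hx =>
        (S.hasDeriv i x (hKU hx)).continuousAt.continuousWithinAt
      have hcont : ContinuousOn (fun p : Euc d × Euc d => dist (S.f i p.1) (S.f i p.2))
          ((K ×ˢ K) ∩ {p : Euc d × Euc d | δ ≤ dist p.1 p.2}) :=
        continuous_dist.comp_continuousOn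
          ((hf.comp continuousOn_fst fun p hp => hp.1.1).prodMk
            (hf.comp continuousOn_snd fun p hp => hp.1.2))
      obtain ⟨p, hp, hmin⟩ := hc.exists_isMinOn hne hcont
      refine ⟨dist (S.f i p.1) (S.f i p.2), ?_, fun x hx y hy hxy =>
        hmin (show (x, y) ∈ _ from ⟨⟨hx, hy⟩, hxy⟩)⟩
      refine dist_pos.2 fun heq => ?_
      have h1 := S.injOnU i (hKU hp.1.1) (hKU hp.1.2) heq
      have h2 : δ ≤ dist p.1 p.2 := hp.2
      rw [h1, dist_self] at h2
      linarith
  obtain ⟨η, hη, hfar⟩ := hfar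
  have hD : 0 ≤ diam K := diam_nonneg
  refine ⟨1 + a⁻¹ + diam K / η + diam K / δ, ?_, fun i p hp q hq => ?_⟩
  · have : 0 ≤ a⁻¹ + diam K / η + diam K / δ := by positivity
    linarith
  rcases lt_or_ge (dist p q) δ with hlt | hge
  · obtain ⟨h1, h2⟩ := h i p hp q hq hlt
    constructor
    · calc dist p q = a⁻¹ * (a * dist p q) := by field_simp
        _ ≤ a⁻¹ * dist (S.f i p) (S.f i q) := by gcongr
        _ ≤ _ := by
          gcongr
          have : 0 ≤ 1 + diam K / η + diam K / δ := by positivity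
          linarith
    · calc dist (S.f i p) (S.f i q) ≤ 1 * dist p q := by linarith
        _ ≤ _ := by
          gcongr
          have : 0 ≤ a⁻¹ + diam K / η + diam K / δ := by positivity
          linarith
  · have h1 := hfar i p hp q hq hge
    constructor
    · calc dist p q ≤ diam K := dist_le_diam_of_mem hK.1.isBounded hp hq
        _ = diam K / η * η := by field_simp
        _ ≤ diam K / η * dist (S.f i p) (S.f i q) := by gcongr
        _ ≤ _ := by
          gcongr
          have : 0 ≤ 1 + a⁻¹ + diam K / δ := by positivity
          linarith
    · calc dist (S.f i p) (S.f i q) ≤ diam K := dist_le_diam_of_mem hK.1.isBounded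
            (S.mapsTo_letter hK i hp) (S.mapsTo_letter hK i hq)
        _ = diam K / δ * δ := by field_simp
        _ ≤ diam K / δ * dist p q := by gcongr
        _ ≤ _ := by
          gcongr
          have : 0 ≤ 1 + a⁻¹ + diam K / η := by positivity
          linarith

/-! ### Decay of diameters and the coding map -/

theorem wpre_succ (x : ℕ → Fin m) (k : ℕ) : wpre x (k + 1) = wpre x k ++ [x k] := by
  rw [wpre, List.ofFn_succ', List.concat_eq_append]
  simp [wpre]

/-- Nonexpansion at scale `δ` upgrades the pointwise limit defining the coding map, tested on a
finite net of `K`, to a bound on the diameter of the whole image of `K`. -/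
theorem diam_wpre (hd : 1 ≤ d) (hK : IsAttractor S K) {proj : (ℕ → Fin m) → Euc d}
    (hwc : WeaklyConformalWith S K proj) (x : ℕ → Fin m) {ε : ℝ} (hε : 0 < ε) :
    ∃ k, ∀ p ∈ K, ∀ q ∈ K, dist (S.wmap (wpre x k) p) (S.wmap (wpre x k) q) < ε := by
  obtain ⟨a, ha, δ, hδ, h⟩ := S.letter_local hd hK
  obtain ⟨t, htK, htf, ht⟩ := hK.1.finite_cover_balls (e := min δ (ε / 4))
    (lt_min hδ (by positivity))
  have h1 : ∀ᶠ k in atTop, ∀ z ∈ t, dist (S.wmap (wpre x k) z) (proj x) < ε / 4 :=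
    (eventually_all_finite htf).2 fun z hz =>
      (hwc.2.1 x z (htK hz)).eventually (ball_mem_nhds _ (by positivity))
  obtain ⟨k, hk⟩ := h1.exists
  have h2 : ∀ p ∈ K, dist (S.wmap (wpre x k) p) (proj x) < ε / 2 := by
    intro p hp
    obtain ⟨z, hz, hpz⟩ := mem_iUnion₂.1 (ht hp)
    rw [mem_ball, lt_min_iff] at hpz
    have h3 := S.word_nonexpanding hK (fun i p hp q hq hpq => (h i p hp q hq hpq).2)
      (wpre x k) hp (htK hz) hpz.1
    have := dist_triangle (S.wmap (wpre x k) p) (S.wmap (wpre x k) z) (proj x)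
    linarith [hk z hz, hpz.2]
  refine ⟨k, fun p hp q hq => ?_⟩
  have := dist_triangle_right (S.wmap (wpre x k) p) (S.wmap (wpre x k) q) (proj x)
  linarith [h2 p hp, h2 q hq]

/-- `diam f_w(K) → 0` as `|w| → ∞`, uniformly in `w`: by compactness of the sequence space, every
long word extends one of finitely many words `u` for which `f_u(K)` is small. -/
theorem diam_word (hd : 1 ≤ d) (hm : 2 ≤ m) (hK : IsAttractor S K)
    {proj : (ℕ → Fin m) → Euc d} (hwc : WeaklyConformalWith S K proj) {ε : ℝ} (hε : 0 < ε) :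
    ∃ N : ℕ, ∀ w : List (Fin m), N ≤ w.length → ∀ p ∈ K, ∀ q ∈ K,
      dist (S.wmap w p) (S.wmap w q) < ε := by
  choose k hk using fun x => S.diam_wpre hd hK hwc x hε
  obtain ⟨t, -, ht⟩ := (isCompact_univ (X := ℕ → Fin m)).elim_nhds_subcover
    (fun x => {y | ∀ j ∈ Finset.range (k x), y j = x j}) (fun x _ => by
      have : (⋂ j ∈ Finset.range (k x), {y : ℕ → Fin m | y j = x j}) ∈ 𝓝 x :=
        (biInter_finset_mem _).2 fun j _ =>
          ((isOpen_discrete ({x j} : Set (Fin m))).preimage (continuous_apply j)).mem_nhds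
            (mem_singleton (x j))
      refine mem_of_superset this fun y hy => ?_
      simpa using hy)
  refine ⟨t.sup k, fun w hw p hp q hq => ?_⟩
  -- an infinite extension of `w`; the letter used past the end is irrelevant
  let y : ℕ → Fin m := fun n => if h : n < w.length then w[n] else ⟨0, by omega⟩
  obtain ⟨x, hxt, hx⟩ := mem_iUnion₂.1 (ht (mem_univ y))
  have hkx : k x ≤ w.length := (Finset.le_sup hxt).trans hw
  have hw' : w = wpre x (k x) ++ w.drop (k x) := by
    conv_lhs => rw [← List.take_append_drop (k x) w]
    congr 1
    apply List.ext_getElem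
    · simp [wpre, hkx]
    intro n h1 h2
    have h3 : n < k x := by simpa [wpre] using h2
    have h4 : y n = x n := hx n (Finset.mem_range.2 h3)
    have h5 : n < w.length := h3.trans_le hkx
    simp only [y, h5, dite_true] at h4
    simp [wpre, h4]
  rw [hw', wmap_append, wmap_append]
  exact hk x _ (S.mapsTo_word hK _ hp) _ (S.mapsTo_word hK _ hq)

theorem proj_surj (hd : 1 ≤ d) (hm : 2 ≤ m) (hK : IsAttractor S K)
    {proj : (ℕ → Fin m) → Euc d} (hwc : WeaklyConformalWith S K proj) {z : Euc d} (hz : z ∈ K) :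
    ∃ y, proj y = z := by
  have h1 : ∀ x : K, ∃ i, ∃ y : K, S.f i y = x := by
    intro x
    have hx : (x : Euc d) ∈ ⋃ i, S.f i '' K := hK.2.2.2 ▸ x.2
    obtain ⟨i, y, hy, hxy⟩ := mem_iUnion.1 hx
    exact ⟨i, ⟨y, hy⟩, hxy⟩
  choose ι g hg using h1
  let y : ℕ → Fin m := fun n => ι (g^[n] ⟨z, hz⟩)
  have h2 : ∀ n, S.wmap (wpre y n) (g^[n] ⟨z, hz⟩ : K) = z := by
    intro n
    induction n with
    | zero => rfl
    | succ n ih =>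
      rw [wpre_succ, wmap_append, Function.iterate_succ_apply']
      simp only [wmap, Function.comp_apply, id, y]
      rw [hg]
      exact ih
  refine ⟨y, tendsto_nhds_unique (hwc.2.1 y z hz) ?_⟩
  rw [Metric.tendsto_atTop]
  intro ε hε
  obtain ⟨N, hN⟩ := S.diam_word hd hm hK hwc hε
  refine ⟨N, fun n hn => ?_⟩
  have := hN (wpre y n) (by simpa [wpre] using hn) z hz _ (g^[n] ⟨z, hz⟩ : K).2
  rwa [h2] at this

/-! ### Weak conformality on blocks -/

theorem opMinNorm_le {A : Euc d →L[ℝ] Euc d} (u : Euc d) : opMinNorm A * ‖u‖ ≤ ‖A u‖ := by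
  rcases eq_or_ne u 0 with rfl | hu
  · simp
  have hu' : 0 < ‖u‖ := norm_pos_iff.2 hu
  have h1 : opMinNorm A ≤ ‖A (‖u‖⁻¹ • u)‖ := by
    refine csInf_le ⟨0, ?_⟩ ⟨_, by simp [norm_smul, hu'.ne'], rfl⟩
    rintro r ⟨v, -, rfl⟩
    exact norm_nonneg _
  rwa [map_smul, norm_smul, norm_inv, norm_norm, inv_mul_eq_div, le_div_iff₀ hu'] at h1

theorem le_opMinNorm (hd : 1 ≤ d) {A : Euc d →L[ℝ] Euc d} {b : ℝ} (h : ∀ u, b * ‖u‖ ≤ ‖A u‖) :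
    b ≤ opMinNorm A := by
  have : Nonempty (Fin d) := ⟨⟨0, hd⟩⟩
  obtain ⟨u, hu⟩ := NormedSpace.sphere_nonempty (x := (0 : Euc d)).2 zero_le_one
  refine le_csInf ⟨_, u, by simpa using hu, rfl⟩ ?_
  rintro r ⟨v, hv, rfl⟩
  simpa [hv] using h v

/-- Weak conformality, read as a bound for all words of one suitable length and all points of
`K`. -/
theorem word_deriv_ratio (hd : 1 ≤ d) (hm : 2 ≤ m) (hK : IsAttractor S K)
    {proj : (ℕ → Fin m) → Euc d} (hwc : WeaklyConformalWith S K proj) {c : ℝ} (hc : 1 < c) :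
    ∃ n ≥ 1, ∀ v : List (Fin m), v.length = n → ∀ z ∈ K,
      0 < opMinNorm (S.wderiv v z) ∧ ‖S.wderiv v z‖ < c ^ n * opMinNorm (S.wderiv v z) := by
  obtain ⟨b, hb, hb'⟩ := S.letter_deriv_bounds hd hK
  have hmin : ∀ v : List (Fin m), ∀ z ∈ K, b ^ v.length ≤ opMinNorm (S.wderiv v z) :=
    fun v z hz => le_opMinNorm hd (S.word_deriv_lower hK hb hb' v hz)
  have hpos : ∀ v : List (Fin m), ∀ z ∈ K, 0 < opMinNorm (S.wderiv v z) :=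
    fun v z hz => (pow_pos hb _).trans_le (hmin v z hz)
  have : Nonempty (Fin d) := ⟨⟨0, hd⟩⟩
  have hnorm : ∀ v : List (Fin m), ∀ z ∈ K, 0 < ‖S.wderiv v z‖ := by
    intro v z hz
    obtain ⟨u, hu⟩ := exists_ne (0 : Euc d)
    have h1 := opMinNorm_le (A := S.wderiv v z) u
    have h2 : 0 < ‖S.wderiv v z u‖ :=
      (mul_pos (hpos v z hz) (norm_pos_iff.2 hu)).trans_le h1
    refine norm_pos_iff.2 fun h => ?_
    simp [h] at h2
  obtain ⟨n, hn, hn1⟩ :=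
    ((hwc.2.2.eventually_lt_const (Real.log_pos hc)).and (eventually_ge_atTop 1)).exists
  refine ⟨n, hn1, fun v hv z hz => ⟨hpos v z hz, ?_⟩⟩
  obtain ⟨y, rfl⟩ := S.proj_surj hd hm hK hwc hz
  -- the sequence `v` followed by `y`, whose `n`-th shift codes the given point of `K`
  let x : ℕ → Fin m := fun j => if h : j < v.length then v[j] else y (j - n)
  have hx1 : wpre x n = v := by
    apply List.ext_getElem
    · simp [wpre, hv]
    intro j h1 h2
    simp [wpre, x, h2]
  have hx2 : shiftSeq x n = y := by
    funext j
    simp [shiftSeq, x, hv]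
  have hn0 : (0 : ℝ) < n := by exact_mod_cast hn1
  -- the supremum is a genuine one: each term is at most `-log b`
  have hbdd : BddAbove (range fun x : ℕ → Fin m =>
      (Real.log ‖S.wderiv (wpre x n) (proj (shiftSeq x n))‖ -
        Real.log (opMinNorm (S.wderiv (wpre x n) (proj (shiftSeq x n))))) / n) := by
    refine ⟨(0 - Real.log (b ^ n)) / n, ?_⟩
    rintro _ ⟨x, rfl⟩
    have hz := hwc.1 (shiftSeq x n)
    have h1 := Real.log_nonpos (norm_nonneg _) (S.word_deriv_norm_le_one hK (wpre x n) hz)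
    have h2 := Real.log_le_log (pow_pos hb _) (hmin (wpre x n) _ hz)
    have h3 : (wpre x n).length = n := by simp [wpre]
    rw [h3] at h2
    dsimp only
    gcongr
  have h1 := (le_ciSup hbdd x).trans_lt hn
  rw [hx1, hx2, div_lt_iff₀ hn0, sub_lt_iff_lt_add, mul_comm, ← Real.log_pow,
    ← Real.log_mul (by positivity) (hpos v _ hz).ne'] at h1
  exact (Real.log_lt_log_iff (hnorm v _ hz) (mul_pos (by positivity) (hpos v _ hz))).1 h1

/-- Words of length `n` are almost similarities on every ball of radius `δ` centred in `K`, with a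
ratio `L` depending on the ball. -/
theorem block_local (hd : 1 ≤ d) (hm : 2 ≤ m) (hK : IsAttractor S K)
    {proj : (ℕ → Fin m) → Euc d} (hwc : WeaklyConformalWith S K proj) {c : ℝ} (hc : 1 < c) :
    ∃ n ≥ 1, ∃ δ > 0, ∀ v : List (Fin m), v.length = n → ∀ x ∈ K, ∃ L > 0,
      ∀ p ∈ ball x δ, ∀ q ∈ ball x δ,
        L * dist p q ≤ c ^ n * dist (S.wmap v p) (S.wmap v q) ∧
        dist (S.wmap v p) (S.wmap v q) ≤ c ^ n * L * dist p q := by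
  obtain ⟨n, hn, h⟩ := S.word_deriv_ratio hd hm hK hwc hc
  have hc0 : 0 < c ^ n := by positivity
  have hc1 : 1 < c ^ n := one_lt_pow₀ hc (by omega)
  refine ⟨n, hn, ?_⟩
  suffices H : ∃ δ > 0, ∀ v : Fin n → Fin m, ∀ x ∈ K, ∃ L > 0,
      ∀ p ∈ ball x δ, ∀ q ∈ ball x δ,
        L * dist p q ≤ c ^ n * dist (S.wmap (List.ofFn v) p) (S.wmap (List.ofFn v) q) ∧
        dist (S.wmap (List.ofFn v) p) (S.wmap (List.ofFn v) q) ≤ c ^ n * L * dist p q by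
    obtain ⟨δ, hδ, H⟩ := H
    refine ⟨δ, hδ, fun v hv => ?_⟩
    subst hv
    simpa only [List.ofFn_get] using H v.get
  apply exists_pos_forall
  · intro v s t _ hts H x hx
    obtain ⟨L, hL, H⟩ := H x hx
    exact ⟨L, hL, fun p hp q hq => H p (ball_subset_ball hts hp) q (ball_subset_ball hts hq)⟩
  intro v
  set w := List.ofFn v with hw
  have hwn : w.length = n := by simp [hw]
  have h1 : ∀ z ∈ K, 0 < ‖S.wderiv w z‖ := by
    intro z hz
    obtain ⟨h1, h2⟩ := h w hwn z hz
    have : Nonempty (Fin d) := ⟨⟨0, hd⟩⟩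
    obtain ⟨u, hu⟩ := exists_ne (0 : Euc d)
    have h3 := opMinNorm_le (A := S.wderiv w z) u
    have h4 := (mul_pos h1 (norm_pos_iff.2 hu)).trans_le h3
    refine norm_pos_iff.2 fun h => ?_
    simp [h] at h4
  -- strict differentiability perturbs the ratio by at most `ε`; in its definition,
  -- the first entry of the minimum serves the lower bound, the second the upper bound
  obtain ⟨δ, hδ, H⟩ := uniform_strict hK.1 (fun z hz => S.strict_word hK w hz)
    (ε := fun z => min (opMinNorm (S.wderiv w z) - ‖S.wderiv w z‖ / c ^ n)
      ((c ^ n - 1) * ‖S.wderiv w z‖)) (fun z hz => lt_min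
        (sub_pos.2 (by rw [div_lt_iff₀ hc0, mul_comm]; exact (h w hwn z hz).2))
        (mul_pos (sub_pos.2 hc1) (h1 z hz)))
  refine ⟨δ, hδ, fun x hx => ?_⟩
  obtain ⟨z, hz, Hz⟩ := H x hx
  refine ⟨‖S.wderiv w z‖, h1 z hz, fun p hp q hq => ?_⟩
  have h2 := Hz p hp q hq
  have h3 := opMinNorm_le (A := S.wderiv w z) (p - q)
  have h4 := (S.wderiv w z).le_opNorm (p - q)
  have h5 := abs_le.1 ((abs_norm_sub_norm_le _ _).trans h2)
  rw [dist_eq_norm, dist_eq_norm]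
  have h6 := mul_le_mul_of_nonneg_right (min_le_left (opMinNorm (S.wderiv w z) -
    ‖S.wderiv w z‖ / c ^ n) ((c ^ n - 1) * ‖S.wderiv w z‖)) (norm_nonneg (p - q))
  have h7 := mul_le_mul_of_nonneg_right (min_le_right (opMinNorm (S.wderiv w z) -
    ‖S.wderiv w z‖ / c ^ n) ((c ^ n - 1) * ‖S.wderiv w z‖)) (norm_nonneg (p - q))
  constructor
  · have h8 : ‖S.wderiv w z‖ / c ^ n * ‖p - q‖ ≤ ‖S.wmap w p - S.wmap w q‖ := by
      linarith [h5.1]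
    calc ‖S.wderiv w z‖ * ‖p - q‖ = c ^ n * (‖S.wderiv w z‖ / c ^ n * ‖p - q‖) := by field_simp
      _ ≤ _ := by gcongr
  · linarith [h5.2]

/-! ### Long words are almost similarities -/

/-- `g` multiplies the distances between points of `K` by a constant `L > 0`, up to a factor `A` in
either direction. The lower bound is stated without dividing by `A`. -/
def AlmostSim (K : Set (Euc d)) (g : Euc d → Euc d) (A : ℝ) : Prop :=
  ∃ L > 0, ∀ p ∈ K, ∀ q ∈ K,
    L * dist p q ≤ A * dist (g p) (g q) ∧ dist (g p) (g q) ≤ A * L * dist p q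

theorem word_biLip (hK : IsAttractor S K) {B : ℝ} (hB : 1 ≤ B)
    (h : ∀ i, ∀ p ∈ K, ∀ q ∈ K,
      dist p q ≤ B * dist (S.f i p) (S.f i q) ∧ dist (S.f i p) (S.f i q) ≤ B * dist p q)
    (w : List (Fin m)) {p q : Euc d} (hp : p ∈ K) (hq : q ∈ K) :
    dist p q ≤ B ^ w.length * dist (S.wmap w p) (S.wmap w q) ∧
      dist (S.wmap w p) (S.wmap w q) ≤ B ^ w.length * dist p q := by
  induction w with
  | nil => simp [wmap]
  | cons i w ih =>
    obtain ⟨h1, h2⟩ := h i _ (S.mapsTo_word hK w hp) _ (S.mapsTo_word hK w hq)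
    have hB0 : 0 ≤ B := by linarith
    constructor
    · calc dist p q ≤ B ^ w.length * dist (S.wmap w p) (S.wmap w q) := ih.1
        _ ≤ B ^ w.length * (B * dist (S.wmap (i :: w) p) (S.wmap (i :: w) q)) := by
          gcongr; exact h1
        _ = _ := by rw [List.length_cons, pow_succ]; ring
    · calc dist (S.wmap (i :: w) p) (S.wmap (i :: w) q) ≤ B * dist (S.wmap w p) (S.wmap w q) := h2
        _ ≤ B * (B ^ w.length * dist p q) := by gcongr; exact ih.2
        _ = _ := by rw [List.length_cons, pow_succ]; ring

theorem word_almostSim (hd : 1 ≤ d) (hm : 2 ≤ m) (hK : IsAttractor S K)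
    {proj : (ℕ → Fin m) → Euc d} (hwc : WeaklyConformalWith S K proj) {c : ℝ} (hc : 1 < c) :
    ∃ D ≥ (1 : ℝ), ∀ w : List (Fin m), AlmostSim K (S.wmap w) (D * c ^ w.length) := by
  obtain ⟨n, hn, δ, hδ, hblock⟩ := S.block_local hd hm hK hwc hc
  obtain ⟨N, hN⟩ := S.diam_word hd hm hK hwc hδ
  obtain ⟨B, hB, hBi⟩ := S.letter_biLip hd hK
  have hB0 : 0 ≤ B := by linarith
  have hc0 : 0 < c := by linarith
  refine ⟨B ^ (N + n), one_le_pow₀ hB, fun w => ?_⟩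
  induction hl : w.length using Nat.strong_induction_on generalizing w with
  | _ l ih =>
  rcases lt_or_ge l (N + n) with hlt | hge
  · have hle : B ^ w.length ≤ B ^ (N + n) * c ^ l := by
      calc B ^ w.length ≤ B ^ (N + n) := pow_le_pow_right₀ hB (by omega)
        _ = B ^ (N + n) * 1 := (mul_one _).symm
        _ ≤ _ := by gcongr; exact one_le_pow₀ hc.le
    refine ⟨1, one_pos, fun p hp q hq => ?_⟩
    obtain ⟨h1, h2⟩ := S.word_biLip hK hB hBi w hp hq
    rw [one_mul, mul_one]
    exact ⟨h1.trans (by gcongr), h2.trans (by gcongr)⟩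
  · obtain ⟨u, v, rfl, hu⟩ : ∃ u v, w = u ++ v ∧ u.length = n :=
      ⟨w.take n, w.drop n, (List.take_append_drop n w).symm, by simp; omega⟩
    rw [List.length_append] at hl
    obtain ⟨L, hL, hv⟩ := ih v.length (by omega) v rfl
    obtain ⟨x, hx⟩ := hK.2.1
    obtain ⟨L', hL', hu'⟩ := hblock u hu _ (S.mapsTo_word hK v hx)
    refine ⟨L' * L, mul_pos hL' hL, fun p hp q hq => ?_⟩
    have hsmall : ∀ p ∈ K, S.wmap v p ∈ ball (S.wmap v x) δ :=
      fun p hp => hN v (by omega) p hp x hx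
    obtain ⟨h1, h2⟩ := hv p hp q hq
    obtain ⟨h3, h4⟩ := hu' _ (hsmall p hp) _ (hsmall q hq)
    rw [wmap_append, wmap_append, show l = n + v.length by omega, pow_add]
    constructor
    · calc L' * L * dist p q = L' * (L * dist p q) := by ring
        _ ≤ L' * (B ^ (N + n) * c ^ v.length * dist (S.wmap v p) (S.wmap v q)) := by gcongr
        _ = B ^ (N + n) * c ^ v.length * (L' * dist (S.wmap v p) (S.wmap v q)) := by ring
        _ ≤ B ^ (N + n) * c ^ v.length *
            (c ^ n * dist (S.wmap u (S.wmap v p)) (S.wmap u (S.wmap v q))) := by gcongr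
        _ = _ := by ring
    · calc dist (S.wmap u (S.wmap v p)) (S.wmap u (S.wmap v q))
          ≤ c ^ n * L' * dist (S.wmap v p) (S.wmap v q) := h4
        _ ≤ c ^ n * L' * (B ^ (N + n) * c ^ v.length * L * dist p q) := by gcongr
        _ = _ := by ring

end C1IFS

/-! ### Diameters -/

theorem diam_image_bounds {d : ℕ} {K E : Set (Euc d)} (hK : Bornology.IsBounded K) (hE : E ⊆ K)
    {g : Euc d → Euc d} (hg : MapsTo g K K) {A L : ℝ} (hA : 0 < A) (hL : 0 < L)
    (h : ∀ p ∈ K, ∀ q ∈ K,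
      L * dist p q ≤ A * dist (g p) (g q) ∧ dist (g p) (g q) ≤ A * L * dist p q) :
    L * diam E ≤ A * diam (g '' E) ∧ diam (g '' E) ≤ A * L * diam E := by
  have hgE : Bornology.IsBounded (g '' E) := hK.subset (by
    rintro _ ⟨x, hx, rfl⟩
    exact hg (hE hx))
  constructor
  · rw [mul_comm, ← le_div_iff₀ hL]
    refine diam_le_of_forall_dist_le (by have := diam_nonneg (s := g '' E); positivity)
      fun p hp q hq => ?_
    rw [le_div_iff₀ hL, mul_comm]
    refine (h p (hE hp) q (hE hq)).1.trans ?_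
    gcongr
    exact dist_le_diam_of_mem hgE (mem_image_of_mem g hp) (mem_image_of_mem g hq)
  · refine diam_le_of_forall_dist_le (by have := diam_nonneg (s := E); positivity) ?_
    rintro _ ⟨p, hp, rfl⟩ _ ⟨q, hq, rfl⟩
    refine (h p (hE hp) q (hE hq)).2.trans ?_
    gcongr
    exact dist_le_diam_of_mem (hK.subset hE) hp hq

/-- For a `C¹` weakly conformal IFS with attractor `K`: for any `c > 1` there is
`D(c) ≥ 1` such that for every `k`, every word `w ∈ Λ^k` and every word `w' ∈ Λ*`,
`(1/2) D^{-2} c^{-2k} |f_w(K)| |f_{w'}(K)| ≤ |f_{w w'}(K)| ≤ 2 D^2 c^{2k} |f_w(K)| |f_{w'}(K)|`. -/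
theorem statement6 {d m : ℕ} (hd : 1 ≤ d) (hm : 2 ≤ m)
    (S : C1IFS d m) (K : Set (Euc d)) (hK : IsAttractor S K)
    (hwc : IsWeaklyConformal S K) :
    ∀ c : ℝ, 1 < c → ∃ D : ℝ, 1 ≤ D ∧
      ∀ (k : ℕ) (w : Fin k → Fin m) (w' : List (Fin m)),
        (1 / 2) * (D ^ 2)⁻¹ * (c ^ (2 * k))⁻¹
            * diam (S.wmap (List.ofFn w) '' K) * diam (S.wmap w' '' K)
          ≤ diam (S.wmap (List.ofFn w ++ w') '' K) ∧
        diam (S.wmap (List.ofFn w ++ w') '' K)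
          ≤ 2 * D ^ 2 * c ^ (2 * k)
            * diam (S.wmap (List.ofFn w) '' K) * diam (S.wmap w' '' K) := by
  intro c hc
  obtain ⟨proj, hwc⟩ := hwc
  obtain ⟨D₀, hD₀, h⟩ := S.word_almostSim hd hm hK hwc hc
  have ha : 0 ≤ diam K := diam_nonneg
  have hinv : 0 ≤ (diam K)⁻¹ := inv_nonneg.2 ha
  have hD₀' : 0 < D₀ := by linarith
  have hc0 : 0 < c := by linarith
  refine ⟨D₀ * (1 + diam K + (diam K)⁻¹), ?_, fun k w w' => ?_⟩
  · nlinarith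
  obtain ⟨L, hL, hw⟩ := h (List.ofFn w)
  rw [List.length_ofFn] at hw
  set u := List.ofFn w
  have hE : S.wmap w' '' K ⊆ K := (S.mapsTo_word hK w').image_subset
  have hcomp : S.wmap (u ++ w') '' K = S.wmap u '' (S.wmap w' '' K) := by
    rw [image_image]
    exact image_congr fun x _ => S.wmap_append u w' x
  rw [hcomp]
  have hA : 0 < D₀ * c ^ k := by positivity
  obtain ⟨h1, h2⟩ := diam_image_bounds hK.1.isBounded subset_rfl (S.mapsTo_word hK u) hA hL hw
  obtain ⟨h3, h4⟩ := diam_image_bounds hK.1.isBounded hE (S.mapsTo_word hK u) hA hL hw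
  have he0 : 0 ≤ diam (S.wmap w' '' K) := diam_nonneg
  have hF0 : 0 ≤ diam (S.wmap u '' K) := diam_nonneg
  have hG0 : 0 ≤ diam (S.wmap u '' (S.wmap w' '' K)) := diam_nonneg
  have heK : diam (S.wmap w' '' K) ≤ diam K := diam_mono hE hK.1.isBounded
  set a := diam K
  set e := diam (S.wmap w' '' K)
  set F := diam (S.wmap u '' K)
  set G := diam (S.wmap u '' (S.wmap w' '' K))
  rw [pow_mul']
  set t := 1 + a + a⁻¹ with ht
  have ht1 : 1 ≤ t := by linarith
  -- `t ^ 2` dominates both `a` and `1 / a`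
  have hta : a ≤ t ^ 2 := by nlinarith
  have hA2 : (D₀ * t) ^ 2 * (c ^ k) ^ 2 = (D₀ * c ^ k) ^ 2 * t ^ 2 := by ring
  set A := D₀ * c ^ k
  rcases ha.eq_or_lt with ha0 | ha0
  · have he : e = 0 := by linarith
    have hG : G = 0 := by rw [he, mul_zero] at h4; linarith
    rw [he, hG]; simp
  have hta' : 1 ≤ t ^ 2 * a := by
    have : a⁻¹ * a = 1 := inv_mul_cancel₀ ha0.ne'
    nlinarith
  constructor
  · have hpos : 0 < (D₀ * t) ^ 2 * (c ^ k) ^ 2 := by positivity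
    have h5 : F * e ≤ (A ^ 2 * t ^ 2) * G := by
      calc F * e ≤ (A * L * a) * e := by gcongr
        _ = A * a * (L * e) := by ring
        _ ≤ A * t ^ 2 * (A * G) := by gcongr
        _ = _ := by ring
    have h6 : ((D₀ * t) ^ 2)⁻¹ * ((c ^ k) ^ 2)⁻¹ * (F * e) ≤ G := by
      rw [← mul_inv, inv_mul_le_iff₀ hpos, hA2]
      exact h5
    nlinarith
  · have h5 : G ≤ A ^ 2 * t ^ 2 * (F * e) := by
      calc G ≤ A * L * e := h4
        _ = A * (L * e) * 1 := by ring
        _ ≤ A * (L * e) * (t ^ 2 * a) := by gcongr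
        _ = A * t ^ 2 * (L * a) * e := by ring
        _ ≤ A * t ^ 2 * (A * F) * e := by gcongr
        _ = _ := by ring
    rw [← hA2] at h5
    have h6 : 2 * (D₀ * t) ^ 2 * (c ^ k) ^ 2 * F * e
        = 2 * ((D₀ * t) ^ 2 * (c ^ k) ^ 2 * (F * e)) := by ring
    have : 0 ≤ (D₀ * t) ^ 2 * (c ^ k) ^ 2 * (F * e) := by positivity
    linarith
end
end

section
/- Let S = {f_1,…,f_m} be a C¹ weakly conformal IFS with attractor K. For any θ > 0 there exist constants C_θ > 0 and Ĉ_θ > 0 such that for every k ∈ ℕ, every word i ∈ Λ^k and every x, y ∈ K, writing c_i(x) = ‖f_i'(x)‖, one has C_θ^{-1} c_i(x)^{1+θ} ‖x−y‖ ≤ ‖f_i(x) − f_i(y)‖ ≤ C_θ c_i(x)^{1−θ} ‖x−y‖, and Ĉ_θ^{-1} c_i(x)^{1+θ} |K| ≤ |f_i(K)| ≤ Ĉ_θ c_i(x)^{1−θ} |K|. -/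
/-!
For a long word `w`, split off a block `u` of a fixed length `n` on the left, `w = u v`, so that
`f_w(x) - f_w(y) = f_u(p) - f_u(q)` with `p = f_v(x)`, `q = f_v(y)`. Weak conformality gives an `n`
for which `‖f_u'(p)‖ ‖z‖ ≤ exp (ε n / 2) ‖f_u'(p) z‖` for all `z`, all `p ∈ K` and all blocks `u`
(`IsAttractor.exists_almost_conformal`). There are finitely many blocks of length `n`, each of them
`C¹` on the compact set `K`, so at small scales `f_u` scales distances by `‖f_u'(p)‖` up to a factor
`exp (ε n)` (`IsAttractor.exists_block_distortion`). The points `p` and `q` are at such a small scale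
once `|v|` is large, because the diameters of the cylinder sets `f_v(K)` tend to `0` uniformly
(`IsAttractor.exists_small_cylinders`); as `f_i` contracts only infinitesimally on a possibly
nonconvex set, this uses the convergence in the definition of the coding map.

Almost conformality of `f_u'(p)` also makes the norm almost multiplicative,
`‖f_u'(p)‖ ‖f_v'(x)‖ ≤ exp (ε n / 2) ‖f_w'(x)‖`, so induction on `|w|` yields
`‖f_w(x) - f_w(y)‖ ≈ ‖f_w'(x)‖ ‖x - y‖` up to a factor `C exp (ε |w|)`
(`IsAttractor.exists_exp_distortion`). Short words are covered by `C`, as each `f_i` is bi-Lipschitz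
on `K`. Finally `‖f_w'(x)‖ ≤ c ^ |w|` with `c < 1`, so for `ε = -θ log c` the error `exp (ε |w|)` is
at most `‖f_w'(x)‖ ^ (-θ)`. The diameter bounds follow from the pointwise ones because any set has
diameter at most twice its radius around `x`.
-/

open Filter Metric Set MeasureTheory Topology ENNReal NNReal

noncomputable section

/-! ### `C¹` maps on compact sets -/

/-- A `C¹` map is uniformly close to its linearization at small scales on a compact set. -/
lemma exists_uniform_linearization {E F : Type*} [NormedAddCommGroup E] [NormedSpace ℝ E]
    [NormedAddCommGroup F] [NormedSpace ℝ F] {K : Set E} (hK : IsCompact K) {f : E → F}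
    {f' : E → E →L[ℝ] F} (hf : ∀ x ∈ K, HasStrictFDerivAt f (f' x) x)
    (hc : ContinuousOn f' K) {η : ℝ} (hη : 0 < η) :
    ∃ δ > 0, ∀ x ∈ K, ∀ y ∈ K, dist x y < δ →
      ‖f x - f y - f' x (x - y)‖ ≤ η * ‖x - y‖ := by
  have key : ∀ p : K, ∃ r > 0,
      (∀ x ∈ ball (p : E) r, ∀ y ∈ ball (p : E) r,
        ‖f x - f y - f' p (x - y)‖ ≤ η / 2 * ‖x - y‖) ∧
      (∀ x ∈ K, x ∈ ball (p : E) r → ‖f' x - f' p‖ ≤ η / 2) := by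
    intro p
    have h1 := (hf p p.2).isLittleO.def (half_pos hη)
    obtain ⟨r1, hr1, h1'⟩ := Metric.mem_nhds_iff.1 h1
    rw [← ball_prod_same] at h1'
    obtain ⟨r2, hr2, h2⟩ := Metric.continuousOn_iff.1 hc p p.2 (η / 2) (half_pos hη)
    refine ⟨min r1 r2, lt_min hr1 hr2, fun x hx y hy => ?_, fun x hx hxr => ?_⟩
    · exact h1' (mk_mem_prod (ball_subset_ball (min_le_left _ _) hx)
        (ball_subset_ball (min_le_left _ _) hy))
    · rw [← dist_eq_norm]
      exact (h2 x hx (lt_of_lt_of_le hxr (min_le_right _ _))).le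
  choose r hr h1 h2 using key
  obtain ⟨δ, hδ, h⟩ := lebesgue_number_lemma_of_metric hK
    (c := fun p : K => ball (p : E) (r p)) (fun _ => isOpen_ball)
    (fun x hx => mem_iUnion.2 ⟨⟨x, hx⟩, mem_ball_self (hr _)⟩)
  refine ⟨δ, hδ, fun x hx y hy hxy => ?_⟩
  obtain ⟨p, hp⟩ := h x hx
  have hxp := hp (mem_ball_self hδ)
  have hyp := hp (show y ∈ ball x δ by rwa [mem_ball, dist_comm])
  have e1 := h1 p x hxp y hyp
  have e2 := (f' x - f' p).le_of_opNorm_le (h2 p x hx hxp) (x - y)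
  calc ‖f x - f y - f' x (x - y)‖
      = ‖(f x - f y - f' p (x - y)) - (f' x - f' p) (x - y)‖ := by
        congr 1; simp only [sub_apply]; abel
    _ ≤ _ := norm_sub_le _ _
    _ ≤ η * ‖x - y‖ := by linarith

/-- The lower bound is obtained near the diagonal from the derivative, and away from the diagonal
from injectivity and compactness. -/
lemma exists_bilipschitz {E F : Type*} [NormedAddCommGroup E] [NormedSpace ℝ E]
    [NormedAddCommGroup F] [NormedSpace ℝ F] {K : Set E} (hK : IsCompact K) {f : E → F}
    {f' : E → E →L[ℝ] F} (hf : ∀ x ∈ K, HasStrictFDerivAt f (f' x) x)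
    (hc : ContinuousOn f' K) (hinj : InjOn f K) {a c : ℝ} (ha : 0 < a)
    (hlow : ∀ x ∈ K, ∀ v, a * ‖v‖ ≤ ‖f' x v‖) (hup : ∀ x ∈ K, ‖f' x‖ ≤ c) :
    ∃ s > 0, ∃ b > 0, ∀ x ∈ K, ∀ y ∈ K,
      s * ‖x - y‖ ≤ ‖f x - f y‖ ∧ ‖f x - f y‖ ≤ b * ‖x - y‖ := by
  obtain ⟨δ, hδ, h⟩ := exists_uniform_linearization hK hf hc (half_pos ha)
  have hfc : ContinuousOn f K := fun x hx => (hf x hx).continuousAt.continuousWithinAt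
  have hT : IsCompact ((K ×ˢ K) ∩ {z : E × E | δ ≤ dist z.1 z.2}) :=
    (hK.prod hK).inter_right (isClosed_le continuous_const (by fun_prop))
  have hTc : ContinuousOn (fun z : E × E => ‖f z.1 - f z.2‖)
      ((K ×ˢ K) ∩ {z : E × E | δ ≤ dist z.1 z.2}) := by
    refine ContinuousOn.norm (ContinuousOn.sub ?_ ?_)
    · exact hfc.comp continuousOn_fst fun z hz => hz.1.1
    · exact hfc.comp continuousOn_snd fun z hz => hz.1.2
  obtain ⟨μ, hμ, hμ'⟩ := hT.exists_forall_le' hTc (a := 0) (by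
    rintro ⟨x, y⟩ ⟨⟨hx, hy⟩, hz⟩
    refine norm_pos_iff.2 fun h0 => ?_
    have : x = y := hinj hx hy (sub_eq_zero.1 h0)
    subst this
    simp only [mem_ofPred_eq, dist_self] at hz
    linarith)
  obtain ⟨M, hM⟩ := hT.exists_bound_of_continuousOn hTc
  set D := diam K + 1 with hD
  have hDpos : 0 < D := by have := diam_nonneg (s := K); linarith
  refine ⟨min (a / 2) (μ / D), by positivity, max (max (c + a / 2) (M / δ)) 1, by positivity,
    fun x hx y hy => ?_⟩
  have hn := norm_nonneg (x - y)
  rcases lt_or_ge (dist x y) δ with hxy | hxy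
  · have e := h x hx y hy hxy
    have e1 := hlow x hx (x - y)
    have e2 := (f' x).le_of_opNorm_le (hup x hx) (x - y)
    have e3 := norm_sub_norm_le (f x - f y) (f' x (x - y))
    have e4 := norm_sub_norm_le (f' x (x - y)) (f x - f y)
    rw [norm_sub_rev (f' x (x - y))] at e4
    constructor
    · calc _ ≤ a / 2 * ‖x - y‖ := by gcongr; exact min_le_left _ _
        _ ≤ _ := by linarith
    · calc _ ≤ (c + a / 2) * ‖x - y‖ := by linarith
        _ ≤ _ := by gcongr; exact (le_max_left _ _).trans (le_max_left _ _)
  · have e1 : μ ≤ ‖f x - f y‖ := hμ' (x, y) ⟨⟨hx, hy⟩, hxy⟩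
    have e2 : ‖f x - f y‖ ≤ M := by simpa using hM (x, y) ⟨⟨hx, hy⟩, hxy⟩
    have e3 : ‖x - y‖ ≤ D := by
      rw [← dist_eq_norm]; exact (dist_le_diam_of_mem hK.isBounded hx hy).trans (by linarith)
    rw [dist_eq_norm] at hxy
    constructor
    · calc _ ≤ μ / D * ‖x - y‖ := by gcongr; exact min_le_right _ _
        _ ≤ μ / D * D := by gcongr
        _ = μ := by field_simp
        _ ≤ _ := e1
    · have hM0 : 0 ≤ M := (norm_nonneg _).trans e2
      calc _ ≤ M := e2
        _ = M / δ * δ := by field_simp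
        _ ≤ M / δ * ‖x - y‖ := by gcongr
        _ ≤ _ := by gcongr; exact (le_max_right _ _).trans (le_max_left _ _)

/-- A continuous family of injective linear maps over a compact set is uniformly bounded below. -/
lemma exists_lower_bound_deriv {E F : Type*} [NormedAddCommGroup E] [NormedSpace ℝ E]
    [FiniteDimensional ℝ E] [NormedAddCommGroup F] [NormedSpace ℝ F] {K : Set E}
    (hK : IsCompact K) {f' : E → E →L[ℝ] F} (hc : ContinuousOn f' K)
    (hinj : ∀ x ∈ K, Function.Injective (f' x)) :
    ∃ a > 0, ∀ x ∈ K, ∀ v, a * ‖v‖ ≤ ‖f' x v‖ := by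
  have : ProperSpace E := FiniteDimensional.proper ℝ E
  have hT : IsCompact (K ×ˢ sphere (0 : E) 1) := hK.prod (isCompact_sphere 0 1)
  have hTc : ContinuousOn (fun z : E × E => ‖f' z.1 z.2‖) (K ×ˢ sphere (0 : E) 1) :=
    ((hc.comp continuousOn_fst fun z hz => hz.1).clm_apply continuousOn_snd).norm
  obtain ⟨a, ha, h⟩ := hT.exists_forall_le' hTc (a := 0) (by
    rintro ⟨x, v⟩ ⟨hx, hv⟩
    refine norm_pos_iff.2 fun h0 => ?_
    have : v = 0 := hinj x hx (by simpa using h0)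
    simp [this] at hv)
  refine ⟨a, ha, fun x hx v => ?_⟩
  rcases eq_or_ne v 0 with rfl | hv
  · simp
  have hv' := norm_pos_iff.2 hv
  have e := h (x, ‖v‖⁻¹ • v) ⟨hx, by simp [norm_smul, hv'.ne']⟩
  simp only [map_smul, norm_smul, norm_inv, norm_norm] at e
  rwa [inv_mul_eq_div, le_div_iff₀ hv'] at e

/-! ### Words: chain rule and uniform constants -/

section words

variable {d m : ℕ} {S : C1IFS d m} {K : Set (Euc d)}

lemma wmap_append (u v : List (Fin m)) (x : Euc d) :
    S.wmap (u ++ v) x = S.wmap u (S.wmap v x) := by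
  induction u with
  | nil => rfl
  | cons i u ih => exact congrArg (S.f i) ih

lemma wderiv_append (u v : List (Fin m)) (x : Euc d) :
    S.wderiv (u ++ v) x = (S.wderiv u (S.wmap v x)).comp (S.wderiv v x) := by
  induction u with
  | nil => exact (ContinuousLinearMap.id_comp _).symm
  | cons i u ih =>
    simp only [List.cons_append, C1IFS.wderiv, ih, wmap_append, ContinuousLinearMap.comp_assoc]

lemma IsAttractor.mapsTo (hK : IsAttractor S K) (i : Fin m) : MapsTo (S.f i) K K := by
  intro x hx
  rw [hK.2.2.2]
  exact mem_iUnion.2 ⟨i, mem_image_of_mem _ hx⟩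

lemma IsAttractor.subset_U (hK : IsAttractor S K) : K ⊆ S.U := hK.2.2.1.trans S.subXU

lemma IsAttractor.wmap_mem (hK : IsAttractor S K) (w : List (Fin m)) {x : Euc d} (hx : x ∈ K) :
    S.wmap w x ∈ K := by
  induction w with
  | nil => exact hx
  | cons i w ih => exact hK.mapsTo i ih

lemma hasStrictFDerivAt_f (S : C1IFS d m) (i : Fin m) {x : Euc d} (hx : x ∈ S.U) :
    HasStrictFDerivAt (S.f i) (S.f' i x) x :=
  hasStrictFDerivAt_of_hasFDerivAt_of_continuousAt
    (Filter.eventually_of_mem (S.openU.mem_nhds hx) fun y hy => S.hasDeriv i y hy)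
    ((S.derivCont i).continuousAt (S.openU.mem_nhds hx))

lemma IsAttractor.hasStrictFDerivAt_wmap (hK : IsAttractor S K) (w : List (Fin m)) {x : Euc d}
    (hx : x ∈ K) : HasStrictFDerivAt (S.wmap w) (S.wderiv w x) x := by
  induction w with
  | nil => exact hasStrictFDerivAt_id x
  | cons i w ih =>
    exact (hasStrictFDerivAt_f S i (hK.subset_U (hK.wmap_mem w hx))).comp x ih

lemma IsAttractor.continuousOn_wderiv (hK : IsAttractor S K) (w : List (Fin m)) :
    ContinuousOn (S.wderiv w) K := by
  induction w with
  | nil => exact continuousOn_const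
  | cons i w ih =>
    refine ContinuousOn.clm_comp (f := fun x => S.wderiv w x)
      (g := fun x => S.f' i (S.wmap w x)) ?_ ih
    refine (S.derivCont i).comp (fun x hx => ?_) fun x hx => hK.subset_U (hK.wmap_mem w hx)
    exact (hK.hasStrictFDerivAt_wmap w hx).continuousAt.continuousWithinAt

/-- Constants valid for all letters at once: the derivatives on `K` have norm at most `c < 1` and
lower bound `a > 0`, and every letter acts on `K` as a bi-Lipschitz map. -/
lemma IsAttractor.exists_constants (hK : IsAttractor S K) :
    ∃ a > 0, ∃ c > 0, c < 1 ∧ ∃ b > 0, ∀ i, ∀ x ∈ K,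
      (∀ v, a * ‖v‖ ≤ ‖S.f' i x v‖) ∧ ‖S.f' i x‖ ≤ c ∧
      ∀ y ∈ K, a * ‖x - y‖ ≤ ‖S.f i x - S.f i y‖ ∧ ‖S.f i x - S.f i y‖ ≤ b * ‖x - y‖ := by
  have hcont : ∀ i, ContinuousOn (S.f' i) K := fun i => (S.derivCont i).mono hK.subset_U
  have h1 : ∀ i, ∃ a > 0, ∃ c < 1, ∃ b > 0, ∀ x ∈ K,
      (∀ v, a * ‖v‖ ≤ ‖S.f' i x v‖) ∧ ‖S.f' i x‖ ≤ c ∧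
      ∀ y ∈ K, a * ‖x - y‖ ≤ ‖S.f i x - S.f i y‖ ∧ ‖S.f i x - S.f i y‖ ≤ b * ‖x - y‖ := by
    intro i
    obtain ⟨a, ha, hlow⟩ := exists_lower_bound_deriv hK.1 (hcont i)
      fun x hx => (S.derivBij i x (hK.subset_U hx)).1
    obtain ⟨c, hc, hup⟩ := S.contract i
    obtain ⟨s, hs, b, hb, h⟩ := exists_bilipschitz hK.1
      (fun x hx => hasStrictFDerivAt_f S i (hK.subset_U hx)) (hcont i)
      ((S.injOnU i).mono hK.subset_U) ha hlow fun x hx => hup x (hK.2.2.1 hx)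
    refine ⟨min a s, lt_min ha hs, c, hc, b, hb, fun x hx => ⟨fun v => ?_, hup x (hK.2.2.1 hx),
      fun y hy => ⟨?_, (h x hx y hy).2⟩⟩⟩
    · exact (mul_le_mul_of_nonneg_right (min_le_left _ _) (norm_nonneg _)).trans (hlow x hx v)
    · exact (mul_le_mul_of_nonneg_right (min_le_right _ _) (norm_nonneg _)).trans (h x hx y hy).1
  choose a ha c hc b hb h using h1
  -- passing to the extremal constants over the finite alphabet
  have hA : ∀ᶠ t in 𝓝[>] (0 : ℝ), ∀ i, t ≤ a i :=
    Filter.eventually_all.2 fun i =>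
      (eventually_le_nhds (ha i)).filter_mono nhdsWithin_le_nhds
  have hC : ∀ᶠ t in 𝓝[<] (1 : ℝ), ∀ i, c i ≤ t :=
    Filter.eventually_all.2 fun i =>
      (eventually_ge_nhds (hc i)).filter_mono nhdsWithin_le_nhds
  have hC0 : ∀ᶠ t in 𝓝[<] (1 : ℝ), 0 < t :=
    (eventually_gt_nhds one_pos).filter_mono nhdsWithin_le_nhds
  have hB : ∀ᶠ t in (atTop : Filter ℝ), ∀ i, b i ≤ t :=
    Filter.eventually_all.2 fun i => eventually_ge_atTop _
  obtain ⟨a', ha', ha0⟩ := (hA.and self_mem_nhdsWithin).exists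
  obtain ⟨c', ⟨hc', hc0⟩, hc1⟩ := ((hC.and hC0).and self_mem_nhdsWithin).exists
  obtain ⟨b', hb', hb0⟩ := (hB.and (eventually_gt_atTop 0)).exists
  refine ⟨a', ha0, c', hc0, hc1, b', hb0, fun i x hx => ⟨fun v => ?_,
    (h i x hx).2.1.trans (hc' i), fun y hy => ⟨?_, ?_⟩⟩⟩
  · exact (mul_le_mul_of_nonneg_right (ha' i) (norm_nonneg _)).trans ((h i x hx).1 v)
  · exact (mul_le_mul_of_nonneg_right (ha' i) (norm_nonneg _)).trans ((h i x hx).2.2 y hy).1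
  · exact ((h i x hx).2.2 y hy).2.trans (mul_le_mul_of_nonneg_right (hb' i) (norm_nonneg _))

lemma wmap_bilipschitz (hK : IsAttractor S K) {a b : ℝ} (ha : 0 < a) (hb : 0 < b)
    (h : ∀ i, ∀ x ∈ K, ∀ y ∈ K,
      a * ‖x - y‖ ≤ ‖S.f i x - S.f i y‖ ∧ ‖S.f i x - S.f i y‖ ≤ b * ‖x - y‖)
    (w : List (Fin m)) {x y : Euc d} (hx : x ∈ K) (hy : y ∈ K) :
    a ^ w.length * ‖x - y‖ ≤ ‖S.wmap w x - S.wmap w y‖ ∧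
      ‖S.wmap w x - S.wmap w y‖ ≤ b ^ w.length * ‖x - y‖ := by
  induction w with
  | nil => simp [C1IFS.wmap]
  | cons i w ih =>
    have e := h i _ (hK.wmap_mem w hx) _ (hK.wmap_mem w hy)
    rw [List.length_cons, pow_succ', pow_succ', mul_assoc, mul_assoc]
    exact ⟨(mul_le_mul_of_nonneg_left ih.1 ha.le).trans e.1,
      e.2.trans (mul_le_mul_of_nonneg_left ih.2 hb.le)⟩

lemma wderiv_lower (hK : IsAttractor S K) {a : ℝ} (ha : 0 < a)
    (h : ∀ i, ∀ x ∈ K, ∀ v, a * ‖v‖ ≤ ‖S.f' i x v‖)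
    (w : List (Fin m)) {x : Euc d} (hx : x ∈ K) (v : Euc d) :
    a ^ w.length * ‖v‖ ≤ ‖S.wderiv w x v‖ := by
  induction w with
  | nil => simp [C1IFS.wderiv]
  | cons i w ih =>
    rw [List.length_cons, pow_succ', mul_assoc]
    exact (mul_le_mul_of_nonneg_left ih ha.le).trans (h i _ (hK.wmap_mem w hx) _)

lemma wderiv_upper (hK : IsAttractor S K) {c : ℝ} (hc : 0 < c)
    (h : ∀ i, ∀ x ∈ K, ‖S.f' i x‖ ≤ c)
    (w : List (Fin m)) {x : Euc d} (hx : x ∈ K) : ‖S.wderiv w x‖ ≤ c ^ w.length := by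
  induction w with
  | nil => exact ContinuousLinearMap.norm_id_le
  | cons i w ih =>
    rw [List.length_cons, pow_succ']
    exact (ContinuousLinearMap.opNorm_comp_le _ _).trans
      (mul_le_mul (h i _ (hK.wmap_mem w hx)) ih (norm_nonneg _) hc.le)

/-- No composition `f_w` expands small distances on `K`. -/
lemma IsAttractor.exists_local_nonexpanding (hK : IsAttractor S K) {c : ℝ} (hc1 : c < 1)
    (h : ∀ i, ∀ x ∈ K, ‖S.f' i x‖ ≤ c) :
    ∃ ρ > 0, ∀ w : List (Fin m), ∀ x ∈ K, ∀ y ∈ K, dist x y < ρ →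
      dist (S.wmap w x) (S.wmap w y) ≤ dist x y := by
  have h1 : ∀ i, ∃ δ > 0, ∀ x ∈ K, ∀ y ∈ K, dist x y < δ →
      ‖S.f i x - S.f i y - S.f' i x (x - y)‖ ≤ (1 - c) * ‖x - y‖ := fun i =>
    exists_uniform_linearization hK.1 (fun x hx => hasStrictFDerivAt_f S i (hK.subset_U hx))
      ((S.derivCont i).mono hK.subset_U) (sub_pos.2 hc1)
  choose δ hδ h1 using h1
  have hA : ∀ᶠ t in 𝓝[>] (0 : ℝ), ∀ i, t ≤ δ i :=
    Filter.eventually_all.2 fun i =>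
      (eventually_le_nhds (hδ i)).filter_mono nhdsWithin_le_nhds
  obtain ⟨ρ, hρ, hρ0⟩ := (hA.and self_mem_nhdsWithin).exists
  refine ⟨ρ, hρ0, fun w x hx y hy hxy => ?_⟩
  induction w with
  | nil => exact le_rfl
  | cons i w ih =>
    refine le_trans ?_ ih
    have hx' := hK.wmap_mem w hx
    have hy' := hK.wmap_mem w hy
    have e := h1 i _ hx' _ hy' (ih.trans_lt (hxy.trans_le (hρ i)))
    have e2 := (S.f' i (S.wmap w x)).le_of_opNorm_le (h i _ hx') (S.wmap w x - S.wmap w y)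
    have e3 := norm_sub_norm_le (S.f i (S.wmap w x) - S.f i (S.wmap w y))
      (S.f' i (S.wmap w x) (S.wmap w x - S.wmap w y))
    rw [dist_eq_norm, dist_eq_norm]
    change ‖S.f i (S.wmap w x) - S.f i (S.wmap w y)‖ ≤ _
    linarith

lemma wpre_add (x : ℕ → Fin m) (k n : ℕ) :
    wpre x (k + n) = wpre x k ++ wpre (shiftSeq x k) n := by
  refine List.ext_getElem (by simp [wpre]) fun j h1 h2 => ?_
  rcases lt_or_ge j k with h | h
  · simp [wpre, h]
  · simp [wpre, shiftSeq, List.getElem_append, h.not_gt, Nat.sub_add_cancel h]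

lemma length_wpre (x : ℕ → Fin m) (k : ℕ) : (wpre x k).length = k := by simp [wpre]

/-- Every finite word can be prepended to every sequence. -/
lemma exists_prepend (w : List (Fin m)) (y : ℕ → Fin m) :
    ∃ x : ℕ → Fin m, wpre x w.length = w ∧ shiftSeq x w.length = y := by
  refine ⟨fun n => if h : n < w.length then w[n] else y (n - w.length), ?_, ?_⟩
  · refine List.ext_getElem (by simp [wpre]) fun j h1 h2 => ?_
    simp [wpre]
  · funext n
    simp [shiftSeq]

/-! ### The coding map and almost conformality of long blocks -/

/-- The diameters of the cylinder sets `f_w(K)` tend to `0` uniformly as `|w| → ∞`: along each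
sequence this follows from the existence of the coding map and local nonexpansion, and compactness
of the sequence space gives uniformity. -/
lemma IsAttractor.exists_small_cylinders [Nonempty (Fin m)] (hK : IsAttractor S K) {c : ℝ}
    (hc1 : c < 1) (h : ∀ i, ∀ x ∈ K, ‖S.f' i x‖ ≤ c) {proj : (ℕ → Fin m) → Euc d}
    (hproj : ∀ x, ∀ z ∈ K, Tendsto (fun k => S.wmap (wpre x k) z) atTop (𝓝 (proj x)))
    {ε : ℝ} (hε : 0 < ε) :
    ∃ N : ℕ, ∀ w : List (Fin m), N ≤ w.length → ∀ p ∈ K, ∀ q ∈ K,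
      dist (S.wmap w p) (S.wmap w q) < ε := by
  obtain ⟨ρ, hρ, hexp⟩ := hK.exists_local_nonexpanding hc1 h
  have hr : 0 < min ρ (ε / 4) := lt_min hρ (by positivity)
  obtain ⟨t, htK, htf, hcov⟩ := hK.1.finite_cover_balls hr
  have hpt : ∀ x : ℕ → Fin m, ∃ k, ∀ p ∈ K, dist (S.wmap (wpre x k) p) (proj x) < ε / 2 := by
    intro x
    have h1 : ∀ᶠ k in atTop, ∀ z ∈ t, dist (S.wmap (wpre x k) z) (proj x) < ε / 4 :=
      (Filter.eventually_all_finite htf).2 fun z hz =>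
        Metric.tendsto_nhds.1 (hproj x z (htK hz)) _ (by positivity)
    obtain ⟨k, hk⟩ := h1.exists
    refine ⟨k, fun p hp => ?_⟩
    obtain ⟨z, hz, hpz⟩ := mem_iUnion₂.1 (hcov hp)
    have hpz' : dist p z < min ρ (ε / 4) := hpz
    have e1 := hexp (wpre x k) p hp z (htK hz) (hpz'.trans_le (min_le_left _ _))
    have e2 := hpz'.trans_le (min_le_right _ _)
    have e3 := hk z hz
    have e4 := dist_triangle (S.wmap (wpre x k) p) (S.wmap (wpre x k) z) (proj x)
    linarith
  have hmain : ∃ N : ℕ, ∀ y ∈ (univ : Set (ℕ → Fin m)), ∀ k, N ≤ k → ∀ p ∈ K, ∀ q ∈ K,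
      dist (S.wmap (wpre y k) p) (S.wmap (wpre y k) q) < ε := by
    refine isCompact_univ.induction_on (p := fun s : Set (ℕ → Fin m) => ∃ N : ℕ, ∀ y ∈ s,
      ∀ k, N ≤ k → ∀ p ∈ K, ∀ q ∈ K,
      dist (S.wmap (wpre y k) p) (S.wmap (wpre y k) q) < ε) ⟨0, by simp⟩ ?_ ?_ ?_
    · rintro s s' hss ⟨N, hN⟩
      exact ⟨N, fun y hy => hN y (hss hy)⟩
    · rintro s s' ⟨N, hN⟩ ⟨N', hN'⟩
      refine ⟨max N N', fun y hy k hk => ?_⟩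
      rcases hy with hy | hy
      · exact hN y hy k ((le_max_left _ _).trans hk)
      · exact hN' y hy k ((le_max_right _ _).trans hk)
    · intro x _
      obtain ⟨k0, hk0⟩ := hpt x
      have hnb : ∀ᶠ y in 𝓝 x, ∀ j : Fin k0, y j = x j :=
        Filter.eventually_all.2 fun j =>
          (continuous_apply (j : ℕ)).continuousAt ((isOpen_discrete {x j}).mem_nhds rfl)
      refine ⟨{y | ∀ j : Fin k0, y j = x j}, mem_nhdsWithin_of_mem_nhds hnb, k0,
        fun y hy k hk p hp q hq => ?_⟩
      obtain ⟨n, rfl⟩ := Nat.exists_eq_add_of_le hk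
      have hpre : wpre y k0 = wpre x k0 := congrArg List.ofFn (funext hy)
      rw [wpre_add, hpre, wmap_append, wmap_append]
      have e1 := hk0 _ (hK.wmap_mem (wpre (shiftSeq y k0) n) hp)
      have e2 := hk0 _ (hK.wmap_mem (wpre (shiftSeq y k0) n) hq)
      exact (dist_triangle_right _ _ _).trans_lt (by linarith)
  obtain ⟨N, hN⟩ := hmain
  refine ⟨N, fun w hw => ?_⟩
  obtain ⟨x, hx, -⟩ := exists_prepend w fun _ => Classical.arbitrary (Fin m)
  have := hN x (mem_univ _) _ hw
  rwa [hx] at this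

/-- The coding map is onto the attractor. -/
lemma IsAttractor.exists_proj_eq [Nonempty (Fin m)] (hK : IsAttractor S K) {c : ℝ}
    (hc1 : c < 1) (h : ∀ i, ∀ x ∈ K, ‖S.f' i x‖ ≤ c) {proj : (ℕ → Fin m) → Euc d}
    (hproj : ∀ x, ∀ z ∈ K, Tendsto (fun k => S.wmap (wpre x k) z) atTop (𝓝 (proj x)))
    {p : Euc d} (hp : p ∈ K) : ∃ y, proj y = p := by
  have hg : ∀ q : K, ∃ i : Fin m, ∃ q' : K, S.f i q' = q := by
    rintro ⟨q, hq⟩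
    have hq' := hq
    rw [hK.2.2.2] at hq'
    obtain ⟨i, q', hq'K, e⟩ := mem_iUnion.1 hq'
    exact ⟨i, ⟨q', hq'K⟩, e⟩
  choose g g' hgg using hg
  -- iterating the choice of a letter and of a preimage yields a coding of `p`
  set P : ℕ → K := fun n => g'^[n] ⟨p, hp⟩ with hP
  set y : ℕ → Fin m := fun n => g (P n) with hy
  have hrec : ∀ k, S.wmap (wpre y k) (P k) = p := by
    intro k
    induction k with
    | zero => rfl
    | succ k ih =>
      have e : wpre (shiftSeq y k) 1 = [y k] := by simp [wpre, shiftSeq]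
      rw [wpre_add, e, wmap_append]
      have e2 : S.wmap [y k] (P (k + 1)) = P k := by
        change S.f (y k) (P (k + 1)) = P k
        simp only [hP, hy, Function.iterate_succ_apply']
        exact hgg _
      rw [e2, ih]
  refine ⟨y, tendsto_nhds_unique (hproj y p hp) (Metric.tendsto_atTop.2 fun ε hε => ?_)⟩
  obtain ⟨N, hN⟩ := hK.exists_small_cylinders hc1 h hproj hε
  refine ⟨N, fun k hk => ?_⟩
  have := hN (wpre y k) (by rwa [length_wpre]) p hp (P k) (P k).2
  rwa [hrec] at this

lemma opMinNorm_mul_le (A : Euc d →L[ℝ] Euc d) (v : Euc d) : opMinNorm A * ‖v‖ ≤ ‖A v‖ := by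
  rcases eq_or_ne v 0 with rfl | hv
  · simp
  have hv' := norm_pos_iff.2 hv
  have hle : opMinNorm A ≤ ‖A (‖v‖⁻¹ • v)‖ :=
    csInf_le ⟨0, by rintro r ⟨u, -, rfl⟩; exact norm_nonneg _⟩
      ⟨‖v‖⁻¹ • v, by simp [norm_smul, hv'.ne'], rfl⟩
  simp only [map_smul, norm_smul, norm_inv, norm_norm] at hle
  rwa [inv_mul_eq_div, le_div_iff₀ hv'] at hle

lemma le_opMinNorm [Nonempty (Fin d)] {A : Euc d →L[ℝ] Euc d} {a : ℝ}
    (h : ∀ v, a * ‖v‖ ≤ ‖A v‖) : a ≤ opMinNorm A := by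
  obtain ⟨u, hu⟩ := exists_norm_eq (Euc d) zero_le_one
  refine le_csInf ⟨_, u, hu, rfl⟩ ?_
  rintro r ⟨v, hv, rfl⟩
  simpa [hv] using h v

/-- Weak conformality in multiplicative form: at some word length `n`, the bound holds at all points
of `K` and for all words of that length. -/
lemma IsAttractor.exists_almost_conformal [Nonempty (Fin m)] [Nonempty (Fin d)]
    (hK : IsAttractor S K) {a c : ℝ} (ha : 0 < a) (hc : 0 < c) (hc1 : c < 1)
    (hlow : ∀ i, ∀ x ∈ K, ∀ v, a * ‖v‖ ≤ ‖S.f' i x v‖)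
    (h : ∀ i, ∀ x ∈ K, ‖S.f' i x‖ ≤ c) (hwc : IsWeaklyConformal S K) {ε : ℝ} (hε : 0 < ε) :
    ∃ n : ℕ, 0 < n ∧ ∀ w : List (Fin m), w.length = n → ∀ p ∈ K, ∀ v,
      ‖S.wderiv w p‖ * ‖v‖ ≤ Real.exp (ε * n) * ‖S.wderiv w p v‖ := by
  obtain ⟨proj, hpK, hproj, hlim⟩ := hwc
  obtain ⟨n, hn, hn0⟩ := ((hlim.eventually (gt_mem_nhds hε)).and (eventually_gt_atTop 0)).exists
  have hn0' : (0 : ℝ) < n := by exact_mod_cast hn0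
  refine ⟨n, hn0, fun w hw p hp v => ?_⟩
  have hmin : ∀ u : List (Fin m), u.length = n → ∀ q ∈ K, a ^ n ≤ opMinNorm (S.wderiv u q) :=
    fun u hu q hq => le_opMinNorm fun v => hu ▸ wderiv_lower hK ha hlow u hq v
  -- without this bound the supremum over sequences would take a junk value
  have hbdd : BddAbove (range fun x : ℕ → Fin m =>
      (Real.log ‖S.wderiv (wpre x n) (proj (shiftSeq x n))‖ -
        Real.log (opMinNorm (S.wderiv (wpre x n) (proj (shiftSeq x n))))) / n) := by
    refine ⟨(0 - Real.log (a ^ n)) / n, ?_⟩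
    rintro _ ⟨x, rfl⟩
    have e1 := hmin _ (length_wpre x n) _ (hpK (shiftSeq x n))
    have e2 := Real.log_le_log (by positivity) e1
    have e3 : Real.log ‖S.wderiv (wpre x n) (proj (shiftSeq x n))‖ ≤ 0 :=
      Real.log_nonpos (norm_nonneg _) ((wderiv_upper hK hc h _ (hpK _)).trans
        (pow_le_one₀ hc.le hc1.le))
    dsimp only
    gcongr
  obtain ⟨y, rfl⟩ := hK.exists_proj_eq hc1 h hproj hp
  obtain ⟨x, hx, hxs⟩ := exists_prepend w y
  rw [hw] at hx hxs
  have e := (le_ciSup hbdd x).trans_lt hn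
  rw [hx, hxs, div_lt_iff₀ hn0'] at e
  set A := S.wderiv w (proj y) with hA
  have hm0 : 0 < opMinNorm A := lt_of_lt_of_le (by positivity) (hmin w hw _ hp)
  have hAm : ‖A‖ ≤ Real.exp (ε * n) * opMinNorm A := by
    rcases (norm_nonneg A).eq_or_lt with h0 | h0
    · rw [← h0]; positivity
    · rw [← Real.log_le_log_iff h0 (by positivity),
        Real.log_mul (Real.exp_pos _).ne' hm0.ne', Real.log_exp]
      linarith
  calc ‖A‖ * ‖v‖ ≤ Real.exp (ε * n) * opMinNorm A * ‖v‖ := by gcongr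
    _ = Real.exp (ε * n) * (opMinNorm A * ‖v‖) := by ring
    _ ≤ _ := by gcongr; exact opMinNorm_mul_le A v

/-! ### Distortion -/

lemma le_norm_wderiv [Nonempty (Fin d)] (hK : IsAttractor S K) {a : ℝ} (ha : 0 < a)
    (h : ∀ i, ∀ x ∈ K, ∀ v, a * ‖v‖ ≤ ‖S.f' i x v‖)
    (w : List (Fin m)) {x : Euc d} (hx : x ∈ K) : a ^ w.length ≤ ‖S.wderiv w x‖ := by
  obtain ⟨u, hu⟩ := exists_norm_eq (Euc d) zero_le_one
  have e1 := wderiv_lower hK ha h w hx u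
  have e2 := (S.wderiv w x).le_opNorm u
  rw [hu, mul_one] at e1 e2
  exact e1.trans e2

/-- For words of one fixed length `n`, almost conformality of the derivatives passes to the maps
themselves at small scales, since the finitely many maps are uniformly close to linear there. -/
lemma IsAttractor.exists_block_distortion [Nonempty (Fin d)] (hK : IsAttractor S K)
    {a t : ℝ} (ha : 0 < a) (ht : 1 < t) (hlow : ∀ i, ∀ x ∈ K, ∀ v, a * ‖v‖ ≤ ‖S.f' i x v‖)
    {n : ℕ} (hconf : ∀ w : List (Fin m), w.length = n → ∀ p ∈ K, ∀ v,
      ‖S.wderiv w p‖ * ‖v‖ ≤ t * ‖S.wderiv w p v‖) :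
    ∃ δ > 0, ∀ w : List (Fin m), w.length = n → ∀ p ∈ K, ∀ q ∈ K, dist p q < δ →
      ‖S.wderiv w p‖ * ‖p - q‖ ≤ t ^ 2 * ‖S.wmap w p - S.wmap w q‖ ∧
      ‖S.wmap w p - S.wmap w q‖ ≤ t * ‖S.wderiv w p‖ * ‖p - q‖ := by
  have ht0 : 0 < t := by linarith
  -- chosen so that the error is absorbed by one factor `t` in both inequalities
  set η : ℝ := (t - 1) / t ^ 2 * a ^ n with hη_def
  have hη : 0 < η := by have := sub_pos.2 ht; positivity
  have h1 : ∀ w : List (Fin m), ∃ δ > 0, ∀ p ∈ K, ∀ q ∈ K, dist p q < δ →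
      ‖S.wmap w p - S.wmap w q - S.wderiv w p (p - q)‖ ≤ η * ‖p - q‖ := fun w =>
    exists_uniform_linearization hK.1 (fun x hx => hK.hasStrictFDerivAt_wmap w hx)
      (hK.continuousOn_wderiv w) hη
  choose δ hδ h1 using h1
  have hA : ∀ᶠ r in 𝓝[>] (0 : ℝ), ∀ w ∈ {w : List (Fin m) | w.length = n}, r ≤ δ w :=
    (Filter.eventually_all_finite (List.finite_length_eq (Fin m) n)).2 fun w _ =>
      (eventually_le_nhds (hδ w)).filter_mono nhdsWithin_le_nhds
  obtain ⟨r, hr, hr0⟩ := (hA.and self_mem_nhdsWithin).exists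
  refine ⟨r, hr0, fun w hw p hp q hq hpq => ?_⟩
  have e := h1 w p hp q hq (hpq.trans_le (hr w hw))
  have hη' : η ≤ (t - 1) / t ^ 2 * ‖S.wderiv w p‖ := by
    have := le_norm_wderiv hK ha hlow w hp
    rw [hw] at this
    have ht1 := sub_pos.2 ht
    rw [hη_def]; gcongr
  have e0 : η * ‖p - q‖ ≤ (t - 1) / t ^ 2 * ‖S.wderiv w p‖ * ‖p - q‖ := by gcongr
  have e1 := hconf w hw p hp (p - q)
  have e2 := (S.wderiv w p).le_opNorm (p - q)
  have e3 := norm_sub_norm_le (S.wmap w p - S.wmap w q) (S.wderiv w p (p - q))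
  have e4 := norm_sub_norm_le (S.wderiv w p (p - q)) (S.wmap w p - S.wmap w q)
  rw [norm_sub_rev (S.wderiv w p (p - q))] at e4
  have hDn : 0 ≤ ‖S.wderiv w p‖ * ‖p - q‖ := by positivity
  constructor
  · have e5 : ‖S.wderiv w p‖ * ‖p - q‖ ≤ t * ‖S.wmap w p - S.wmap w q‖ +
        (t - 1) / t * (‖S.wderiv w p‖ * ‖p - q‖) := by
      calc _ ≤ t * ‖S.wderiv w p (p - q)‖ := e1
        _ ≤ t * (‖S.wmap w p - S.wmap w q‖ +
            (t - 1) / t ^ 2 * ‖S.wderiv w p‖ * ‖p - q‖) := by gcongr; linarith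
        _ = _ := by field_simp
    have e6 : (t - 1) / t = 1 - t⁻¹ := by field_simp
    rw [e6] at e5
    have e7 : t⁻¹ * (‖S.wderiv w p‖ * ‖p - q‖) ≤ t * ‖S.wmap w p - S.wmap w q‖ := by linarith
    rw [inv_mul_le_iff₀ ht0] at e7
    linarith
  · have e5 : (t - 1) / t ^ 2 ≤ t - 1 :=
      div_le_self (sub_pos.2 ht).le (one_le_pow₀ ht.le)
    have e6 : (t - 1) / t ^ 2 * (‖S.wderiv w p‖ * ‖p - q‖) ≤
        (t - 1) * (‖S.wderiv w p‖ * ‖p - q‖) := by gcongr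
    linarith

/-- Distortion with subexponential error: at each point of `K`, the maps `f_w` scale distances by
the norm of the derivative up to a factor `C exp (ε |w|)`. -/
lemma IsAttractor.exists_exp_distortion [Nonempty (Fin m)] [Nonempty (Fin d)]
    (hK : IsAttractor S K) (hwc : IsWeaklyConformal S K) {ε : ℝ} (hε : 0 < ε) :
    ∃ C > 0, ∀ w : List (Fin m), ∀ x ∈ K, ∀ y ∈ K,
      ‖S.wderiv w x‖ * ‖x - y‖ ≤
        C * Real.exp (ε * w.length) * ‖S.wmap w x - S.wmap w y‖ ∧
      ‖S.wmap w x - S.wmap w y‖ ≤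
        C * Real.exp (ε * w.length) * ‖S.wderiv w x‖ * ‖x - y‖ := by
  obtain ⟨a, ha, c, hc, hc1, b, hb, hconst⟩ := hK.exists_constants
  have hlow : ∀ i, ∀ x ∈ K, ∀ v, a * ‖v‖ ≤ ‖S.f' i x v‖ := fun i x hx => (hconst i x hx).1
  have hup : ∀ i, ∀ x ∈ K, ‖S.f' i x‖ ≤ c := fun i x hx => (hconst i x hx).2.1
  obtain ⟨n, hn, hconf⟩ := hK.exists_almost_conformal ha hc hc1 hlow hup hwc (half_pos hε)
  set t := Real.exp (ε / 2 * n) with ht_def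
  have ht : 1 < t := Real.one_lt_exp_iff.2 (by positivity)
  have htt : t ^ 2 = Real.exp (ε * n) := by
    rw [ht_def, ← Real.exp_nat_mul]; congr 1; push_cast; ring
  obtain ⟨δ, hδ, hblock⟩ := hK.exists_block_distortion ha ht hlow hconf
  obtain ⟨N, hN⟩ : ∃ N : ℕ, ∀ w : List (Fin m), N ≤ w.length → ∀ p ∈ K, ∀ q ∈ K,
      dist (S.wmap w p) (S.wmap w q) < δ := by
    obtain ⟨proj, -, hproj, -⟩ := hwc
    exact hK.exists_small_cylinders hc1 hup hproj hδ
  have hCev : ∀ᶠ C in (atTop : Filter ℝ), ∀ j ∈ {j : ℕ | j < N + n}, (1 + b ^ j) / a ^ j ≤ C :=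
    (Filter.eventually_all_finite (finite_lt_nat (N + n))).2 fun j _ => eventually_ge_atTop _
  obtain ⟨C, hCj, hC⟩ := (hCev.and (eventually_gt_atTop 0)).exists
  refine ⟨C, hC, fun w x hx y hy => ?_⟩
  induction hk : w.length using Nat.strong_induction_on generalizing w with
  | _ k ih =>
    rcases lt_or_ge k (N + n) with hkN | hkN
    · -- short words: the constant `C` alone suffices
      have hCk := hCj k hkN
      have hak : 0 < a ^ k := by positivity
      have hbk : 0 < b ^ k := by positivity
      rw [div_le_iff₀ hak] at hCk
      obtain ⟨e1, e2⟩ := wmap_bilipschitz hK ha hb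
        (fun i x hx y hy => (hconst i x hx).2.2 y hy) w hx hy
      have e3 := le_norm_wderiv hK ha hlow w hx
      have e4 := (wderiv_upper hK hc hup w hx).trans (pow_le_one₀ hc.le hc1.le)
      rw [hk] at e1 e2 e3
      have hE : 1 ≤ Real.exp (ε * k) := Real.one_le_exp (by positivity)
      have hCE : C ≤ C * Real.exp (ε * k) := le_mul_of_one_le_right hC.le hE
      constructor
      · calc ‖S.wderiv w x‖ * ‖x - y‖ ≤ 1 * ‖x - y‖ := by gcongr
          _ ≤ C * a ^ k * ‖x - y‖ := by gcongr; linarith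
          _ = C * (a ^ k * ‖x - y‖) := by ring
          _ ≤ C * Real.exp (ε * k) * ‖S.wmap w x - S.wmap w y‖ := by gcongr
      · calc _ ≤ b ^ k * ‖x - y‖ := e2
          _ ≤ C * a ^ k * ‖x - y‖ := by gcongr; linarith
          _ ≤ C * Real.exp (ε * k) * ‖S.wderiv w x‖ * ‖x - y‖ := by gcongr
    · -- long words: `w = u v` with `u` a block of length `n`, applied at the scale of `f_v(K)`
      obtain ⟨u, v, rfl, hu⟩ : ∃ u v, w = u ++ v ∧ u.length = n :=
        ⟨w.take n, w.drop n, (List.take_append_drop n w).symm, by simp; omega⟩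
      rw [List.length_append, hu] at hk
      have hx' := hK.wmap_mem v hx
      have hy' := hK.wmap_mem v hy
      obtain ⟨l, r⟩ := ih v.length (by omega) v rfl
      obtain ⟨bl, br⟩ := hblock u hu _ hx' _ hy' (hN v (by omega) x hx y hy)
      have hexp : Real.exp (ε * k) = t ^ 2 * Real.exp (ε * v.length) := by
        rw [htt, ← Real.exp_add, ← hk]; congr 1; push_cast; ring
      have ht0 : 0 < t := by linarith
      rw [wderiv_append, wmap_append, wmap_append, hexp]
      set p := S.wmap v x
      set q := S.wmap v y
      constructor
      · calc _ ≤ (‖S.wderiv u p‖ * ‖S.wderiv v x‖) * ‖x - y‖ := by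
              gcongr; exact ContinuousLinearMap.opNorm_comp_le _ _
          _ = ‖S.wderiv u p‖ * (‖S.wderiv v x‖ * ‖x - y‖) := by ring
          _ ≤ ‖S.wderiv u p‖ * (C * Real.exp (ε * v.length) * ‖p - q‖) := by gcongr
          _ = C * Real.exp (ε * v.length) * (‖S.wderiv u p‖ * ‖p - q‖) := by ring
          _ ≤ C * Real.exp (ε * v.length) *
                (t ^ 2 * ‖S.wmap u p - S.wmap u q‖) := by gcongr
          _ = _ := by ring
      · -- conformality of the block makes the norm almost multiplicative
        have hmul : ‖S.wderiv u p‖ * ‖S.wderiv v x‖ ≤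
            t * ‖(S.wderiv u p).comp (S.wderiv v x)‖ := by
          have hpos : 0 < ‖S.wderiv u p‖ :=
            lt_of_lt_of_le (by positivity) (le_norm_wderiv hK ha hlow u hx')
          rw [← le_div_iff₀' hpos]
          refine ContinuousLinearMap.opNorm_le_bound _ (by positivity) fun z => ?_
          rw [div_mul_eq_mul_div, le_div_iff₀' hpos, mul_assoc]
          refine (hconf u hu p hx' (S.wderiv v x z)).trans ?_
          gcongr
          exact ((S.wderiv u p).comp (S.wderiv v x)).le_opNorm z
        calc _ ≤ t * ‖S.wderiv u p‖ * ‖p - q‖ := br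
          _ ≤ t * ‖S.wderiv u p‖ *
                (C * Real.exp (ε * v.length) * ‖S.wderiv v x‖ * ‖x - y‖) := by gcongr
          _ = t * C * Real.exp (ε * v.length) * ‖x - y‖ *
                (‖S.wderiv u p‖ * ‖S.wderiv v x‖) := by ring
          _ ≤ t * C * Real.exp (ε * v.length) * ‖x - y‖ *
                (t * ‖(S.wderiv u p).comp (S.wderiv v x)‖) := by gcongr
          _ = _ := by ring

end words

/-- Bounded distortion for a `C¹` weakly conformal IFS: for any `θ > 0` there are
constants `C_θ, Ĉ_θ > 0` such that for every word `w` and all `x, y ∈ K`, writing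
`c_w(x) = ‖f_w'(x)‖`:
`C⁻¹ c_w(x)^{1+θ} ‖x-y‖ ≤ ‖f_w(x) - f_w(y)‖ ≤ C c_w(x)^{1-θ} ‖x-y‖` and
`Ĉ⁻¹ c_w(x)^{1+θ} |K| ≤ |f_w(K)| ≤ Ĉ c_w(x)^{1-θ} |K|`. -/
theorem statement7 {d m : ℕ} (hd : 1 ≤ d) (hm : 2 ≤ m)
    (S : C1IFS d m) (K : Set (Euc d)) (hK : IsAttractor S K)
    (hwc : IsWeaklyConformal S K)
    (θ : ℝ) (hθ : 0 < θ) :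
    ∃ C : ℝ, 0 < C ∧ ∃ Chat : ℝ, 0 < Chat ∧
      ∀ (w : List (Fin m)), ∀ x ∈ K, ∀ y ∈ K,
        (C⁻¹ * ‖S.wderiv w x‖ ^ (1 + θ) * ‖x - y‖ ≤ ‖S.wmap w x - S.wmap w y‖ ∧
          ‖S.wmap w x - S.wmap w y‖ ≤ C * ‖S.wderiv w x‖ ^ (1 - θ) * ‖x - y‖) ∧
        (Chat⁻¹ * ‖S.wderiv w x‖ ^ (1 + θ) * diam K ≤ diam (S.wmap w '' K) ∧
          diam (S.wmap w '' K) ≤ Chat * ‖S.wderiv w x‖ ^ (1 - θ) * diam K) := by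
  have : Nonempty (Fin m) := ⟨⟨0, by omega⟩⟩
  have : Nonempty (Fin d) := ⟨⟨0, by omega⟩⟩
  obtain ⟨a, ha, c, hc, hc1, b, hb, hconst⟩ := hK.exists_constants
  have hup : ∀ i, ∀ x ∈ K, ‖S.f' i x‖ ≤ c := fun i x hx => (hconst i x hx).2.1
  -- with this `ε`, `exp (ε k) = (c ^ k) ^ (-θ)`
  set ε : ℝ := -(θ * Real.log c) with hε_def
  have hε : 0 < ε := by
    have := mul_neg_of_pos_of_neg hθ (Real.log_neg hc hc1); linarith
  obtain ⟨C, hC, hdist⟩ := hK.exists_exp_distortion hwc hε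
  have hpos : ∀ (w : List (Fin m)), ∀ x ∈ K, 0 < ‖S.wderiv w x‖ := fun w x hx =>
    lt_of_lt_of_le (pow_pos ha _)
      (le_norm_wderiv hK ha (fun i x hx => (hconst i x hx).1) w hx)
  have hexp : ∀ (w : List (Fin m)), ∀ x ∈ K,
      Real.exp (ε * w.length) ≤ ‖S.wderiv w x‖ ^ (-θ) := by
    intro w x hx
    have e := wderiv_upper hK hc hup w hx
    have e2 := Real.rpow_le_rpow_of_nonpos (hpos w x hx) e (neg_nonpos.2 hθ.le)
    refine le_trans (le_of_eq ?_) e2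
    rw [Real.rpow_def_of_pos (pow_pos hc _), Real.log_pow]
    congr 1
    rw [hε_def]; ring
  have hpt : ∀ (w : List (Fin m)), ∀ x ∈ K, ∀ y ∈ K,
      C⁻¹ * ‖S.wderiv w x‖ ^ (1 + θ) * ‖x - y‖ ≤ ‖S.wmap w x - S.wmap w y‖ ∧
        ‖S.wmap w x - S.wmap w y‖ ≤ C * ‖S.wderiv w x‖ ^ (1 - θ) * ‖x - y‖ := by
    intro w x hx y hy
    obtain ⟨hl, hu⟩ := hdist w x hx y hy
    have hD := hpos w x hx
    have hE := hexp w x hx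
    constructor
    · rw [Real.rpow_add hD, Real.rpow_one]
      calc C⁻¹ * (‖S.wderiv w x‖ * ‖S.wderiv w x‖ ^ θ) * ‖x - y‖
          = C⁻¹ * ‖S.wderiv w x‖ ^ θ * (‖S.wderiv w x‖ * ‖x - y‖) := by ring
        _ ≤ C⁻¹ * ‖S.wderiv w x‖ ^ θ *
              (C * ‖S.wderiv w x‖ ^ (-θ) * ‖S.wmap w x - S.wmap w y‖) := by
            have hl' := hl.trans (show _ ≤
              C * ‖S.wderiv w x‖ ^ (-θ) * ‖S.wmap w x - S.wmap w y‖ by gcongr)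
            exact mul_le_mul_of_nonneg_left hl' (by positivity)
        _ = ‖S.wmap w x - S.wmap w y‖ := by
            rw [Real.rpow_neg hD.le]
            have := (Real.rpow_pos_of_pos hD θ).ne'
            field_simp
    · rw [sub_eq_neg_add 1 θ, Real.rpow_add hD, Real.rpow_one]
      calc _ ≤ C * Real.exp (ε * w.length) * ‖S.wderiv w x‖ * ‖x - y‖ := hu
        _ ≤ C * ‖S.wderiv w x‖ ^ (-θ) * ‖S.wderiv w x‖ * ‖x - y‖ := by gcongr
        _ = _ := by ring
  refine ⟨C, hC, 2 * C, by positivity, fun w x hx y hy => ⟨hpt w x hx y hy, ?_, ?_⟩⟩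
  · have hbd : Bornology.IsBounded (S.wmap w '' K) :=
      hK.1.isBounded.subset (by rintro _ ⟨z, hz, rfl⟩; exact hK.wmap_mem w hz)
    set R := ‖S.wderiv w x‖ ^ (1 + θ) with hR
    have hR0 : 0 < R := Real.rpow_pos_of_pos (hpos w x hx) _
    have hrad : ∀ z ∈ K, dist x z ≤ C * R⁻¹ * diam (S.wmap w '' K) := by
      intro z hz
      have e := (hpt w x hx z hz).1
      have e2 := dist_le_diam_of_mem hbd (mem_image_of_mem _ hx) (mem_image_of_mem _ hz)
      rw [← dist_eq_norm, ← dist_eq_norm] at e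
      calc dist x z = C * R⁻¹ * (C⁻¹ * R * dist x z) := by field_simp
        _ ≤ _ := by gcongr; exact e.trans e2
    have hdiam : diam K ≤ 2 * (C * R⁻¹ * diam (S.wmap w '' K)) := by
      have h0 : 0 ≤ C * R⁻¹ * diam (S.wmap w '' K) :=
        mul_nonneg (by positivity) diam_nonneg
      refine diam_le_of_forall_dist_le (by positivity) fun z hz z' hz' => ?_
      have := dist_triangle_left z z' x
      linarith [hrad z hz, hrad z' hz']
    calc (2 * C)⁻¹ * R * diam K
        ≤ (2 * C)⁻¹ * R * (2 * (C * R⁻¹ * diam (S.wmap w '' K))) := by gcongr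
      _ = diam (S.wmap w '' K) := by field_simp
  · set R := ‖S.wderiv w x‖ ^ (1 - θ) with hR
    have hR0 : 0 < R := Real.rpow_pos_of_pos (hpos w x hx) _
    have hrad : ∀ z ∈ K, dist (S.wmap w x) (S.wmap w z) ≤ C * R * diam K := by
      intro z hz
      rw [dist_eq_norm]
      refine (hpt w x hx z hz).2.trans ?_
      rw [← dist_eq_norm]
      gcongr
      exact dist_le_diam_of_mem hK.1.isBounded hx hz
    have h0 : 0 ≤ diam K := diam_nonneg
    refine diam_le_of_forall_dist_le (by positivity) ?_
    rintro _ ⟨z, hz, rfl⟩ _ ⟨z', hz', rfl⟩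
    have := dist_triangle_left (S.wmap w z) (S.wmap w z') (S.wmap w x)
    linarith [hrad z hz, hrad z' hz']
end
end
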